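/- arXiv:2001.07894 — 3 statements merged into one kernel-verified Lean document; each statement's English description precedes it below -/
import Mathlib

section
/- For every n-vertex unicyclic graph G with n ≥ 3, n(US_n) ≥ n(G) ≥ n(UP_n), where n(·) denotes the total number of subtrees. -/
open SimpleGraph

/-- A subtree of `G` is a nonempty connected acyclic subgraph of `G`. -/
def IsSubtree {V : Type*} {G : SimpleGraph V} (H : G.Subgraph) : Prop :=
  H.Connected ∧ H.coe.IsAcyclic

/-- `nk G k` : the number of subtrees of `G` with exactly `k` vertices. -/
noncomputable def nk {V : Type*} (G : SimpleGraph V) (k : ℕ) : ℕ :=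
  Nat.card {H : G.Subgraph // IsSubtree H ∧ H.verts.ncard = k}

/-- number of `k`-vertex subtrees of `G` containing the vertex `v`. -/
noncomputable def nkAt {V : Type*} (G : SimpleGraph V) (v : V) (k : ℕ) : ℕ :=
  Nat.card {H : G.Subgraph // IsSubtree H ∧ v ∈ H.verts ∧ H.verts.ncard = k}

/-- `nT G` : total number of subtrees of `G`, counting the empty subtree once. -/
noncomputable def nT {V : Type*} (G : SimpleGraph V) : ℕ :=
  1 + Nat.card {H : G.Subgraph // IsSubtree H}

/-- number of subtrees of `G` containing the vertex `v`. -/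
noncomputable def nAt {V : Type*} (G : SimpleGraph V) (v : V) : ℕ :=
  Nat.card {H : G.Subgraph // IsSubtree H ∧ v ∈ H.verts}

/-- the path on `n` vertices `0 - 1 - ⋯ - (n-1)`. -/
def pathG (n : ℕ) : SimpleGraph (Fin n) :=
  SimpleGraph.fromRel (fun u v => v.val = u.val + 1)

/-- the cycle on `n` vertices. -/
def cycG (n : ℕ) : SimpleGraph (Fin n) :=
  SimpleGraph.fromRel (fun u v => v.val = u.val + 1 ∨ (u.val = 0 ∧ v.val + 1 = n))

/-- the star on `n` vertices with center `0`. -/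
def starG (n : ℕ) : SimpleGraph (Fin n) :=
  SimpleGraph.fromRel (fun u _ => u.val = 0)

/-- `USnl n l` : the cycle `C_l` (on `0,…,l-1`) with `n - l` pendant vertices attached
to the vertex `0`. -/
def USnl (n l : ℕ) : SimpleGraph (Fin n) :=
  SimpleGraph.fromRel (fun u v =>
    (v.val = u.val + 1 ∧ v.val < l) ∨ (u.val = 0 ∧ v.val + 1 = l) ∨ (u.val = 0 ∧ l ≤ v.val))

/-- `UPnl n l` : the cycle `C_l` (on `0,…,l-1`) with a pendant path of length `n - l`
attached to the vertex `l-1`. -/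
def UPnl (n l : ℕ) : SimpleGraph (Fin n) :=
  SimpleGraph.fromRel (fun u v => v.val = u.val + 1 ∨ (u.val = 0 ∧ v.val + 1 = l))

/-- `US_n` : the star `S_n` together with an edge joining two of its leaves. -/
def USn (n : ℕ) : SimpleGraph (Fin n) := USnl n 3

/-- `UP_n` : a triangle with a pendant path, obtained by identifying a vertex of `C_3`
with an end of `P_{n-2}`. -/
def UPn (n : ℕ) : SimpleGraph (Fin n) := UPnl n 3

/-- the Merrifield–Simmons index: the number of independent vertex subsets
(including the empty set). -/
noncomputable def sigmaG {V : Type*} (G : SimpleGraph V) : ℕ :=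
  Nat.card {s : Set V // ∀ u ∈ s, ∀ v ∈ s, ¬ G.Adj u v}

/-- the Hosoya index: the number of matchings (including the empty one). -/
noncomputable def hosoya {V : Type*} (G : SimpleGraph V) : ℕ :=
  Nat.card {s : Set (Sym2 V) // s ⊆ G.edgeSet ∧
    s.Pairwise (fun e f => ∀ v, ¬(v ∈ e ∧ v ∈ f))}

/-- the Wiener index: the sum of the distances over all unordered pairs of vertices. -/
noncomputable def wiener {V : Type*} [Fintype V] (G : SimpleGraph V) : ℕ :=
  (∑ u : V, ∑ v : V, G.dist u v) / 2

/-!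
Every unicyclic graph is a cycle to which leaves are attached one at a time: grow a maximal subgraph
of this kind; it is spanning by connectedness, and then has as many edges as the whole graph.

Write `N` for the number of nonempty subtrees and `N_x` for the number of those through `x`.
Attaching a leaf `v` at `u` adds the subtrees through `v`, which are `v` itself and those through
`u` extended by `v`. So `N` grows by `N_u + 1`, `N_v = N_u + 1` in the new graph, and `N_x` grows by
the number of subtrees through both `u` and `x`, which lies between `1` and `N_x`.

A subtree `H` of a cycle of length `m` misses one more edge of it than vertices. Summing over all
`H` and exchanging the sums, `N` is the number of subtrees of the `m` paths obtained by deleting an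
edge minus that of the `m` paths obtained by deleting a vertex, that is
`m * (m + 1).choose 2 - m * m.choose 2 = m ^ 2`.

By induction `k + 3 ≤ N_x ≤ 3 * 2 ^ k / 4` on `k` vertices, and summing the growth of `N` over the
attached leaves yields the two bounds. Starting from a triangle, `UP_n` and `US_n` attain the lower,
respectively the upper, bound on `N_x` each time they grow at `x`.
-/

variable {V : Type*} {G : SimpleGraph V} {H K : G.Subgraph} {t : Set V} {u v x : V}

section Subtree

theorem isSubtree_iff_connected_and_card [Finite V] :
    IsSubtree H ↔ H.Connected ∧ H.edgeSet.ncard + 1 = H.verts.ncard := by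
  have hcard : H.coe.edgeSet.ncard = H.edgeSet.ncard := by
    rw [← Subgraph.image_coe_edgeSet_coe,
      Set.ncard_image_of_injective _ (Sym2.map.injective Subtype.val_injective)]
  rw [← hcard]
  exact ⟨fun ⟨hconn, hacyc⟩ ↦ ⟨hconn, (isTree_iff_connected_and_card.1 ⟨hconn.coe, hacyc⟩).2⟩,
    fun ⟨hconn, hedges⟩ ↦
      ⟨hconn, (isTree_iff_connected_and_card.2 ⟨hconn.coe, hedges⟩).isAcyclic⟩⟩

theorem isSubtree_singletonSubgraph (v : V) : IsSubtree (G.singletonSubgraph v) :=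
  ⟨Subgraph.singletonSubgraph_connected, IsTree.coe_singletonSubgraph G v |>.isAcyclic⟩

theorem eq_singletonSubgraph_of_forall_not_adj (hH : H.Connected) (hv : v ∈ H.verts)
    (hadj : ∀ w, ¬ H.Adj v w) : H = G.singletonSubgraph v := by
  have hverts : H.verts = {v} := by
    refine Set.eq_singleton_iff_unique_mem.2 ⟨hv, fun x hx ↦ ?_⟩
    by_contra hxv
    have : Nontrivial H.verts := ⟨⟨x, hx⟩, ⟨v, hv⟩, by simpa using hxv⟩
    obtain ⟨w, hw⟩ := hH.preconnected.exists_adj_of_nontrivial ⟨v, hv⟩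
    exact hadj w hw
  refine Subgraph.ext hverts ?_
  ext x y
  simp only [singletonSubgraph_adj, Pi.bot_apply, Prop.bot_eq_false, iff_false]
  intro hxy
  obtain rfl : x = v := by simpa [hverts] using hxy.fst_mem
  exact hadj y hxy

theorem isSubtree_deleteVerts_singleton (hH : IsSubtree H) (hv : (H.neighborSet v).Subsingleton)
    (hne : (H.deleteVerts {v}).verts.Nonempty) : IsSubtree (H.deleteVerts {v}) := by
  refine ⟨Subgraph.connected_iff.2 ⟨⟨?_⟩, hne⟩,
    hH.2.comap _ (Subgraph.inclusion.injective Subgraph.deleteVerts_le)⟩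
  refine (Subgraph.coeDeleteVertsIso _).preconnected_iff.2
    (hH.1.preconnected.coe.induce_of_degree_eq_one fun x hx y hy z hz ↦ ?_)
  obtain rfl : x.1 = v := by simpa using hx
  exact Subtype.ext (hv hy hz)

end Subtree

/-- The subgraph `K` enlarged by the edge `uv`. It is used for `u` in `K` and `v` outside `K`, so
that `v` is a new leaf attached at `u`. -/
def attachLeaf (h : G.Adj u v) (K : G.Subgraph) : G.Subgraph :=
  K ⊔ G.subgraphOfAdj h

section AttachLeaf

variable (h : G.Adj u v)

theorem le_attachLeaf : K ≤ attachLeaf h K := le_sup_left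

theorem attachLeaf_mono (hHK : H ≤ K) : attachLeaf h H ≤ attachLeaf h K :=
  sup_le_sup_right hHK _

theorem attachLeaf_adj {x y : V} :
    (attachLeaf h K).Adj x y ↔ K.Adj x y ∨ s(u, v) = s(x, y) := by
  simp only [attachLeaf, Subgraph.sup_adj, subgraphOfAdj_adj]

theorem verts_attachLeaf (hu : u ∈ K.verts) : (attachLeaf h K).verts = insert v K.verts := by
  simp only [attachLeaf, Subgraph.verts_sup, subgraphOfAdj_verts]
  grind

theorem edgeSet_attachLeaf : (attachLeaf h K).edgeSet = insert s(u, v) K.edgeSet := by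
  simp only [attachLeaf, Subgraph.edgeSet_sup, edgeSet_subgraphOfAdj, Set.union_singleton]

theorem eq_of_attachLeaf_adj (hv : v ∉ K.verts) (hx : (attachLeaf h K).Adj v x) : x = u := by
  rcases (attachLeaf_adj h).1 hx with hKx | hKx
  · exact absurd hKx.fst_mem hv
  · grind [h.ne]

theorem ncard_verts_attachLeaf [Finite V] (hu : u ∈ K.verts) (hv : v ∉ K.verts) :
    (attachLeaf h K).verts.ncard = K.verts.ncard + 1 := by
  rw [verts_attachLeaf h hu, Set.ncard_insert_of_notMem hv]

theorem ncard_edgeSet_attachLeaf [Finite V] (hv : v ∉ K.verts) :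
    (attachLeaf h K).edgeSet.ncard = K.edgeSet.ncard + 1 := by
  rw [edgeSet_attachLeaf, Set.ncard_insert_of_notMem fun hmem ↦ hv (K.edge_vert hmem.symm)]

theorem connected_attachLeaf (hK : K.Connected) (hu : u ∈ K.verts) :
    (attachLeaf h K).Connected :=
  Subgraph.connected_sup hK.preconnected (Subgraph.subgraphOfAdj_connected h).preconnected
    ⟨u, hu, Set.mem_insert u {v}⟩

theorem isSubtree_attachLeaf [Finite V] (hH : IsSubtree H) (hu : u ∈ H.verts) (hv : v ∉ H.verts) :
    IsSubtree (attachLeaf h H) := by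
  rw [isSubtree_iff_connected_and_card] at hH ⊢
  exact ⟨connected_attachLeaf h hH.1 hu,
    by rw [ncard_verts_attachLeaf h hu hv, ncard_edgeSet_attachLeaf h hv, hH.2]⟩

theorem deleteVerts_attachLeaf (hu : u ∈ K.verts) (hv : v ∉ K.verts) :
    (attachLeaf h K).deleteVerts {v} = K := by
  refine Subgraph.ext ?_ ?_
  · rw [Subgraph.deleteVerts_verts, verts_attachLeaf h hu, Set.insert_sdiff_self_of_notMem hv]
  · ext x y
    have hadj : K.Adj x y → x ∈ K.verts ∧ y ∈ K.verts := fun hxy ↦ ⟨hxy.fst_mem, hxy.snd_mem⟩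
    simp only [Subgraph.deleteVerts_adj, verts_attachLeaf h hu, attachLeaf_adj]
    grind

theorem attachLeaf_deleteVerts (huv : H.Adj u v) (hv : H.neighborSet v ⊆ {u}) :
    attachLeaf h (H.deleteVerts {v}) = H := by
  have huniq (x : V) (hx : H.Adj v x) : x = u := hv hx
  refine Subgraph.ext ?_ ?_
  · rw [verts_attachLeaf h (show u ∈ H.verts \ {v} from ⟨huv.fst_mem, h.ne⟩),
      Subgraph.deleteVerts_verts, Set.insert_sdiff_singleton, Set.insert_eq_of_mem huv.snd_mem]
  · ext x y
    have hadj : H.Adj x y → x ∈ H.verts ∧ y ∈ H.verts := fun hxy ↦ ⟨hxy.fst_mem, hxy.snd_mem⟩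
    have hcomm : H.Adj x y ↔ H.Adj y x := H.adj_comm x y
    simp only [attachLeaf_adj, Subgraph.deleteVerts_adj]
    grind

end AttachLeaf

/-- The subtrees of the ambient graph that lie inside the subgraph `K` and contain every vertex
of `t`. -/
def subtreesBetween (t : Set V) (K : G.Subgraph) : Set G.Subgraph :=
  {H | IsSubtree H ∧ t ⊆ H.verts ∧ H ≤ K}

/-- The number of subtrees of `K` through all vertices of `t`: `subtreeCount ∅ K` counts all
nonempty subtrees of `K`, and `subtreeCount {v} K` those through `v`. -/
noncomputable def subtreeCount (t : Set V) (K : G.Subgraph) : ℕ :=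
  (subtreesBetween t K).ncard

theorem nT_eq_subtreeCount_add_one (G : SimpleGraph V) :
    nT G = subtreeCount ∅ (⊤ : G.Subgraph) + 1 := by
  simp only [nT, subtreeCount, subtreesBetween, Set.empty_subset, le_top, and_true,
    Set.coe_ofPred, ← Nat.card_coe_set_eq, add_comm 1]

theorem le_deleteVerts_iff {s : Set V} :
    H ≤ K.deleteVerts s ↔ H ≤ K ∧ Disjoint H.verts s := by
  refine ⟨fun hH ↦ ⟨hH.trans Subgraph.deleteVerts_le,
    Set.disjoint_left.2 fun x hx ↦ (hH.1 hx).2⟩, fun ⟨hHK, hdisj⟩ ↦ ?_⟩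
  have hmem (x : V) (hx : x ∈ H.verts) : x ∈ K.verts ∧ x ∉ s :=
    ⟨hHK.1 hx, Set.disjoint_left.1 hdisj hx⟩
  refine ⟨hmem, fun x y hxy ↦ Subgraph.deleteVerts_adj.2 ?_⟩
  exact ⟨(hmem x hxy.fst_mem).1, (hmem x hxy.fst_mem).2, (hmem y hxy.snd_mem).1,
    (hmem y hxy.snd_mem).2, hHK.2 hxy⟩

theorem subtreesBetween_deleteVerts_singleton :
    subtreesBetween t (K.deleteVerts {v}) = subtreesBetween t K \ {H | v ∈ H.verts} := by
  ext H
  simp only [subtreesBetween, le_deleteVerts_iff, Set.disjoint_singleton_right,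
    Set.mem_sdiff, Set.mem_ofPred_eq, and_assoc]

theorem subtreesBetween_insert :
    subtreesBetween (insert v t) K = subtreesBetween t K ∩ {H | v ∈ H.verts} := by
  ext H
  simp only [subtreesBetween, Set.insert_subset_iff, Set.mem_inter_iff, Set.mem_ofPred_eq]
  tauto

theorem subtreeCount_insert_add_deleteVerts [Finite V] (v : V) (t : Set V) (K : G.Subgraph) :
    subtreeCount (insert v t) K + subtreeCount t (K.deleteVerts {v}) = subtreeCount t K := by
  rw [subtreeCount, subtreeCount, subtreesBetween_insert, subtreesBetween_deleteVerts_singleton]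
  exact Set.ncard_inter_add_ncard_sdiff_eq_ncard _ _

section LeafCount

variable (h : G.Adj u v)

theorem injOn_attachLeaf (hv : v ∉ K.verts) :
    Set.InjOn (attachLeaf h) (subtreesBetween (insert u t) K) := by
  intro H hH H' hH' heq
  have hdel {H : G.Subgraph} (hH : H ∈ subtreesBetween (insert u t) K) :
      (attachLeaf h H).deleteVerts {v} = H :=
    deleteVerts_attachLeaf h (hH.2.1 (Set.mem_insert u t)) fun hvH ↦ hv (hH.2.2.1 hvH)
  rw [← hdel hH, ← hdel hH', heq]

theorem subtreesBetween_insert_attachLeaf [Finite V] (hu : u ∈ K.verts) (hv : v ∉ K.verts)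
    (ht : v ∉ t) :
    subtreesBetween (insert v t) (attachLeaf h K) \ {G.singletonSubgraph v} =
      attachLeaf h '' subtreesBetween (insert u t) K := by
  ext H
  constructor
  · rintro ⟨⟨hH, htH, hHK⟩, hne⟩
    have hvH : v ∈ H.verts := htH (Set.mem_insert v t)
    have huniq : H.neighborSet v ⊆ {u} := fun x hx ↦ eq_of_attachLeaf_adj h hv (hHK.2 hx)
    obtain ⟨w, hvw⟩ : ∃ w, H.Adj v w := by
      by_contra! hadj
      exact hne (eq_singletonSubgraph_of_forall_not_adj hH.1 hvH hadj)
    obtain rfl : w = u := huniq hvw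
    have hw : w ∈ (H.deleteVerts {v}).verts := ⟨hvw.snd_mem, h.ne⟩
    refine ⟨H.deleteVerts {v}, ⟨isSubtree_deleteVerts_singleton hH
      (Set.subsingleton_singleton.anti huniq) ⟨w, hw⟩, ?_, ?_⟩,
      attachLeaf_deleteVerts h hvw.symm huniq⟩
    · exact Set.insert_subset hw fun x hx ↦
        ⟨htH (Set.mem_insert_of_mem v hx), by rintro rfl; exact ht hx⟩
    · exact deleteVerts_attachLeaf h hu hv ▸ Subgraph.deleteVerts_mono hHK
  · rintro ⟨H, ⟨hH, htH, hHK⟩, rfl⟩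
    have huH : u ∈ H.verts := htH (Set.mem_insert u t)
    refine ⟨⟨isSubtree_attachLeaf h hH huH fun hvH ↦ hv (hHK.1 hvH), ?_,
      attachLeaf_mono h hHK⟩, fun heq ↦ ?_⟩
    · rw [verts_attachLeaf h huH]
      exact Set.insert_subset_insert ((Set.subset_insert u t).trans htH)
    · have : u ∈ (G.singletonSubgraph v).verts :=
        heq ▸ (le_attachLeaf h (K := H)).1 huH
      exact h.ne this

theorem subtreeCount_insert_attachLeaf [Finite V] (hu : u ∈ K.verts) (hv : v ∉ K.verts)
    (ht : v ∉ t) (hne : t.Nonempty) :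
    subtreeCount (insert v t) (attachLeaf h K) = subtreeCount (insert u t) K := by
  have hnot : G.singletonSubgraph v ∉ subtreesBetween (insert v t) (attachLeaf h K) := by
    rintro ⟨-, hsub, -⟩
    obtain ⟨x, hx⟩ := hne
    obtain rfl : x = v := hsub (Set.mem_insert_of_mem v hx)
    exact ht hx
  rw [subtreeCount, ← Set.sdiff_singleton_eq_self hnot,
    subtreesBetween_insert_attachLeaf h hu hv ht, (injOn_attachLeaf h hv).ncard_image, subtreeCount]

theorem subtreeCount_leaf_attachLeaf [Finite V] (hu : u ∈ K.verts) (hv : v ∉ K.verts) :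
    subtreeCount {v} (attachLeaf h K) = subtreeCount {u} K + 1 := by
  have hmem : G.singletonSubgraph v ∈ subtreesBetween (insert v ∅) (attachLeaf h K) :=
    ⟨isSubtree_singletonSubgraph v, by simp, by simp [verts_attachLeaf h hu]⟩
  have := subtreesBetween_insert_attachLeaf h hu hv (Set.notMem_empty v)
  rw [← LawfulSingleton.insert_empty_eq, subtreeCount, ← Set.ncard_sdiff_singleton_add_one hmem,
    this, (injOn_attachLeaf h hv).ncard_image, LawfulSingleton.insert_empty_eq, subtreeCount]

theorem subtreeCount_attachLeaf [Finite V] (hu : u ∈ K.verts) (hv : v ∉ K.verts) :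
    subtreeCount ∅ (attachLeaf h K) = subtreeCount ∅ K + subtreeCount {u} K + 1 := by
  rw [← subtreeCount_insert_add_deleteVerts v, deleteVerts_attachLeaf h hu hv,
    LawfulSingleton.insert_empty_eq, subtreeCount_leaf_attachLeaf h hu hv]
  ring

theorem subtreeCount_singleton_attachLeaf [Finite V] (hu : u ∈ K.verts) (hv : v ∉ K.verts)
    (hx : x ≠ v) :
    subtreeCount {x} (attachLeaf h K) = subtreeCount {x} K + subtreeCount {u, x} K := by
  rw [← subtreeCount_insert_add_deleteVerts v, deleteVerts_attachLeaf h hu hv,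
    subtreeCount_insert_attachLeaf h hu hv hx.symm (Set.singleton_nonempty x), add_comm]

end LeafCount

section Connected

theorem subtreeCount_anti [Finite V] {s t : Set V} (hst : s ⊆ t) (K : G.Subgraph) :
    subtreeCount t K ≤ subtreeCount s K :=
  Set.ncard_le_ncard fun _ hH ↦ ⟨hH.1, hst.trans hH.2.1, hH.2.2⟩

theorem exists_isSubtree_verts_eq (hK : K.Connected) :
    ∃ H ≤ K, IsSubtree H ∧ H.verts = K.verts := by
  obtain ⟨T, hTK, hT⟩ := hK.coe.exists_isTree_le
  let H : G.Subgraph :=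
    { verts := K.verts
      Adj := fun x y ↦ ∃ (hx : x ∈ K.verts) (hy : y ∈ K.verts), T.Adj ⟨x, hx⟩ ⟨y, hy⟩
      adj_sub := fun ⟨_, _, hxy⟩ ↦ K.adj_sub (hTK hxy)
      edge_vert := fun ⟨hx, _, _⟩ ↦ hx
      symm := ⟨fun _ _ ⟨hx, hy, hxy⟩ ↦ ⟨hy, hx, hxy.symm⟩⟩ }
  have hcoe : H.coe = T := by
    ext x y
    exact ⟨fun ⟨_, _, hxy⟩ ↦ hxy, fun hxy ↦ ⟨x.2, y.2, hxy⟩⟩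
  refine ⟨H, ⟨subset_rfl, fun x y ⟨_, _, hxy⟩ ↦ hTK hxy⟩, ⟨⟨?_⟩, ?_⟩, rfl⟩
  · exact hcoe ▸ hT.1
  · exact hcoe ▸ hT.isAcyclic

theorem subtreeCount_pos [Finite V] (hK : K.Connected) (ht : t ⊆ K.verts) :
    0 < subtreeCount t K := by
  obtain ⟨H, hHK, hH, hverts⟩ := exists_isSubtree_verts_eq hK
  exact (Set.ncard_pos).2 ⟨H, hH, hverts ▸ ht, hHK⟩

end Connected

section Path

theorem subtreesBetween_singletonSubgraph (ht : t ⊆ {v}) :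
    subtreesBetween t (G.singletonSubgraph v) = {G.singletonSubgraph v} := by
  ext H
  refine ⟨fun ⟨hH, _, hle⟩ ↦ ?_, ?_⟩
  · obtain ⟨x, hx⟩ := hH.1.nonempty
    obtain rfl : x = v := hle.1 hx
    exact eq_singletonSubgraph_of_forall_not_adj hH.1 hx fun w hw ↦ hle.2 hw
  · rintro rfl
    exact ⟨isSubtree_singletonSubgraph v, ht, le_rfl⟩

theorem toSubgraph_cons_eq_attachLeaf {w : V} (h : G.Adj u v) (p : G.Walk v w) :
    (Walk.cons h p).toSubgraph = attachLeaf h.symm p.toSubgraph := by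
  rw [Walk.toSubgraph, attachLeaf, sup_comm, subgraphOfAdj_symm]

variable [Finite V]

theorem subtreeCount_start_of_isPath {p : G.Walk u v} (hp : p.IsPath) :
    subtreeCount {u} p.toSubgraph = p.length + 1 := by
  induction p with
  | nil => rw [Walk.toSubgraph, subtreeCount, subtreesBetween_singletonSubgraph subset_rfl,
      Set.ncard_singleton, Walk.length_nil]
  | cons h p ih =>
    obtain ⟨hp, hu⟩ := (Walk.cons_isPath_iff h p).1 hp
    rw [toSubgraph_cons_eq_attachLeaf, subtreeCount_leaf_attachLeaf _ p.start_mem_verts_toSubgraph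
      (by rwa [Walk.mem_verts_toSubgraph]), ih hp, Walk.length_cons]

theorem subtreeCount_of_isPath {p : G.Walk u v} (hp : p.IsPath) :
    subtreeCount ∅ p.toSubgraph = (p.length + 2).choose 2 := by
  induction p with
  | nil => rw [Walk.toSubgraph, subtreeCount,
      subtreesBetween_singletonSubgraph (Set.empty_subset _), Set.ncard_singleton,
      Walk.length_nil, Nat.choose_self]
  | cons h p ih =>
    obtain ⟨hp, hu⟩ := (Walk.cons_isPath_iff h p).1 hp
    rw [toSubgraph_cons_eq_attachLeaf, subtreeCount_attachLeaf _ p.start_mem_verts_toSubgraph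
      (by rwa [Walk.mem_verts_toSubgraph]), ih hp, subtreeCount_start_of_isPath hp,
      Walk.length_cons, Nat.choose_succ_succ' (p.length + 2) 1, Nat.choose_one_right]
    ring

end Path

section DoubleCounting

theorem le_deleteEdges_iff {s : Set (Sym2 V)} :
    H ≤ K.deleteEdges s ↔ H ≤ K ∧ Disjoint H.edgeSet s := by
  refine ⟨fun hle ↦ ⟨hle.trans (Subgraph.deleteEdges_le s), ?_⟩, fun ⟨hHK, hdisj⟩ ↦ ?_⟩
  · exact Set.disjoint_left.2 fun e ↦ e.ind fun x y hxy ↦ (hle.2 hxy).2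
  · exact ⟨hHK.1, fun x y hxy ↦ ⟨hHK.2 hxy, Set.disjoint_left.1 hdisj hxy⟩⟩

theorem subtreesBetween_deleteEdges_singleton {e : Sym2 V} :
    subtreesBetween t (K.deleteEdges {e}) = subtreesBetween t K \ {H | e ∈ H.edgeSet} := by
  ext H
  simp only [subtreesBetween, le_deleteEdges_iff, Set.disjoint_singleton_right,
    Set.mem_sdiff, Set.mem_ofPred_eq, and_assoc]

theorem sum_ncard_sdiff_comm {α β : Type*} [Finite α] [Finite β] (r : α → β → Prop) (s : Set α)
    (t : Set β) :
    ∑ a ∈ s.toFinite.toFinset, (t \ {b | r a b}).ncard =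
      ∑ b ∈ t.toFinite.toFinset, (s \ {a | r a b}).ncard := by
  classical
  have hbelow (b : β) :
      s \ {a | r a b} = s.toFinite.toFinset.bipartiteBelow (fun a b ↦ ¬ r a b) b := by
    ext a; simp
  have habove (a : α) :
      t \ {b | r a b} = t.toFinite.toFinset.bipartiteAbove (fun a b ↦ ¬ r a b) a := by
    ext b; simp
  simp only [hbelow, habove, Set.ncard_coe_finset]
  exact Finset.sum_card_bipartiteAbove_eq_sum_card_bipartiteBelow _

theorem sum_subtreeCount_deleteEdges [Finite V] (t : Set V) (K : G.Subgraph) :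
    ∑ e ∈ K.edgeSet.toFinite.toFinset, subtreeCount t (K.deleteEdges {e}) =
      ∑ H ∈ (subtreesBetween t K).toFinite.toFinset, (K.edgeSet \ H.edgeSet).ncard := by
  simp only [subtreeCount, subtreesBetween_deleteEdges_singleton]
  exact sum_ncard_sdiff_comm (fun e (H : G.Subgraph) ↦ e ∈ H.edgeSet) _ _

theorem sum_subtreeCount_deleteVerts [Finite V] (t : Set V) (K : G.Subgraph) :
    ∑ x ∈ K.verts.toFinite.toFinset, subtreeCount t (K.deleteVerts {x}) =
      ∑ H ∈ (subtreesBetween t K).toFinite.toFinset, (K.verts \ H.verts).ncard := by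
  simp only [subtreeCount, subtreesBetween_deleteVerts_singleton]
  exact sum_ncard_sdiff_comm (fun x (H : G.Subgraph) ↦ x ∈ H.verts) _ _

theorem sum_subtreeCount_deleteEdges_eq_add_sum_deleteVerts [Finite V]
    (hK : K.edgeSet.ncard = K.verts.ncard) :
    ∑ e ∈ K.edgeSet.toFinite.toFinset, subtreeCount t (K.deleteEdges {e}) =
      subtreeCount t K + ∑ x ∈ K.verts.toFinite.toFinset, subtreeCount t (K.deleteVerts {x}) := by
  have hterm (H : G.Subgraph) (hH : H ∈ (subtreesBetween t K).toFinite.toFinset) :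
      (K.edgeSet \ H.edgeSet).ncard = 1 + (K.verts \ H.verts).ncard := by
    obtain ⟨hH, -, hHK⟩ := (Set.Finite.mem_toFinset _).1 hH
    have hcard := (isSubtree_iff_connected_and_card.1 hH).2
    have hE := Set.ncard_sdiff_add_ncard_of_subset (Subgraph.edgeSet_mono hHK)
    have hV := Set.ncard_sdiff_add_ncard_of_subset hHK.1
    omega
  rw [sum_subtreeCount_deleteEdges, sum_subtreeCount_deleteVerts, Finset.sum_congr rfl hterm,
    Finset.sum_add_distrib, Finset.sum_const, smul_eq_mul, mul_one, subtreeCount,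
    Set.ncard_eq_toFinset_card]

end DoubleCounting

section Cycle

variable {a b : V} {c : G.Walk a a}

theorem ncard_verts_toSubgraph_of_isCycle (hc : c.IsCycle) :
    c.toSubgraph.verts.ncard = c.length := by
  classical
  have hverts : c.toSubgraph.verts = c.support.tail.toFinset := by
    ext x
    rw [Walk.mem_verts_toSubgraph, List.coe_toFinset, Set.mem_ofPred_eq]
    rw [Walk.mem_support_iff, or_iff_right_of_imp]
    rintro rfl
    exact c.end_mem_tail_support hc.not_nil
  rw [hverts, Set.ncard_coe_finset, List.toFinset_card_of_nodup hc.support_nodup,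
    List.length_tail, Walk.length_support, Nat.add_sub_cancel]

theorem ncard_edgeSet_toSubgraph_of_isTrail {p : G.Walk a b} (hp : p.IsTrail) :
    p.toSubgraph.edgeSet.ncard = p.length := by
  classical
  rw [Walk.edgeSet_toSubgraph, ← p.length_edges, ← List.toFinset_card_of_nodup hp.edges_nodup,
    ← Set.ncard_coe_finset, List.coe_toFinset]
  rfl

theorem exists_cons_isCycle_of_adj (hc : c.IsCycle) (hab : c.toSubgraph.Adj u v) :
    ∃ (h : G.Adj u v) (p : G.Walk v u), (Walk.cons h p).IsCycle ∧
      (Walk.cons h p).length = c.length ∧ (Walk.cons h p).toSubgraph = c.toSubgraph := by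
  classical
  have hu : u ∈ c.support := c.mem_verts_toSubgraph.1 hab.fst_mem
  have hrot := hc.rotate hu
  have exists_cons {d : G.Walk u u} (hd : d.IsCycle) (hsnd : v = d.snd) :
      ∃ (h : G.Adj u v) (p : G.Walk v u), Walk.cons h p = d := by
    subst hsnd
    exact ⟨d.adj_snd hd.not_nil, d.tail, d.cons_tail_eq hd.not_nil⟩
  have hv : v ∈ (c.rotate u hu).toSubgraph.neighborSet u := by rwa [Walk.toSubgraph_rotate]
  rw [hrot.neighborSet_toSubgraph_endpoint] at hv
  rcases hv with hv | hv
  · obtain ⟨h, p, heq⟩ := exists_cons hrot hv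
    exact ⟨h, p, heq ▸ hrot, by rw [heq, Walk.length_rotate], by rw [heq, Walk.toSubgraph_rotate]⟩
  · obtain ⟨h, p, heq⟩ := exists_cons hrot.reverse (hv.trans (Walk.snd_reverse _).symm)
    exact ⟨h, p, heq ▸ hrot.reverse, by rw [heq, Walk.length_reverse, Walk.length_rotate],
      by rw [heq, Walk.toSubgraph_reverse, Walk.toSubgraph_rotate]⟩

theorem exists_isPath_toSubgraph_eq_deleteEdges (hc : c.IsCycle) (hadj : c.toSubgraph.Adj u v) :
    ∃ p : G.Walk v u, p.IsPath ∧ p.length + 1 = c.length ∧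
      p.toSubgraph = c.toSubgraph.deleteEdges {s(u, v)} := by
  obtain ⟨h, p, hcyc, hlen, heq⟩ := exists_cons_isCycle_of_adj hc hadj
  obtain ⟨hp, hnot⟩ := (Walk.cons_isCycle_iff p h).1 hcyc
  refine ⟨p, hp, hlen, ?_⟩
  rw [← heq, toSubgraph_cons_eq_attachLeaf]
  refine Subgraph.ext ?_ ?_
  · rw [Subgraph.deleteEdges_verts, verts_attachLeaf _ p.start_mem_verts_toSubgraph,
      Set.insert_eq_of_mem p.end_mem_verts_toSubgraph]
  · ext x y
    have hne : p.toSubgraph.Adj x y → s(x, y) ≠ s(u, v) := fun hxy he ↦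
      hnot (he ▸ p.mem_edges_toSubgraph.1 hxy)
    rw [Subgraph.deleteEdges_adj, attachLeaf_adj, Set.mem_singleton_iff, Sym2.eq_swap]
    tauto

theorem exists_isPath_toSubgraph_eq_deleteVerts (hc : c.IsCycle) (hv : v ∈ c.toSubgraph.verts) :
    ∃ (u w : V) (p : G.Walk u w), p.IsPath ∧ p.length + 2 = c.length ∧
      p.toSubgraph = c.toSubgraph.deleteVerts {v} := by
  obtain ⟨w, hw⟩ : (c.toSubgraph.neighborSet v).Nonempty := by
    refine Set.nonempty_of_ncard_ne_zero ?_
    rw [hc.ncard_neighborSet_toSubgraph_eq_two (c.mem_verts_toSubgraph.1 hv)]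
    exact two_ne_zero
  obtain ⟨p, hp, hlen, heq⟩ := exists_isPath_toSubgraph_eq_deleteEdges hc
    (Subgraph.Adj.symm hw)
  have hdel : c.toSubgraph.deleteVerts {v} = p.toSubgraph.deleteVerts {v} := by
    rw [heq]
    refine Subgraph.ext rfl ?_
    ext x y
    simp only [Subgraph.deleteVerts_adj, Subgraph.deleteEdges_adj, Subgraph.deleteEdges_verts]
    grind
  cases p with
  | nil => exact absurd rfl hw.ne
  | cons h q =>
    obtain ⟨hq, hvq⟩ := (Walk.cons_isPath_iff h q).1 hp
    refine ⟨_, _, q, hq, hlen, ?_⟩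
    rw [hdel, toSubgraph_cons_eq_attachLeaf, deleteVerts_attachLeaf _ q.start_mem_verts_toSubgraph
      (by rwa [Walk.mem_verts_toSubgraph])]

variable [Finite V]

theorem subtreeCount_of_isCycle (hc : c.IsCycle) : subtreeCount ∅ c.toSubgraph = c.length ^ 2 := by
  have hV := ncard_verts_toSubgraph_of_isCycle hc
  have hE := ncard_edgeSet_toSubgraph_of_isTrail hc.isTrail
  have hedge (e : Sym2 V) (he : e ∈ c.toSubgraph.edgeSet.toFinite.toFinset) :
      subtreeCount ∅ (c.toSubgraph.deleteEdges {e}) = (c.length + 1).choose 2 := by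
    induction e with | _ x y
    obtain ⟨p, hp, hlen, heq⟩ := exists_isPath_toSubgraph_eq_deleteEdges hc
      (Subgraph.mem_edgeSet.1 ((Set.Finite.mem_toFinset _).1 he))
    rw [← heq, subtreeCount_of_isPath hp, ← hlen]
  have hvert (x : V) (hx : x ∈ c.toSubgraph.verts.toFinite.toFinset) :
      subtreeCount ∅ (c.toSubgraph.deleteVerts {x}) = c.length.choose 2 := by
    obtain ⟨_, _, p, hp, hlen, heq⟩ := exists_isPath_toSubgraph_eq_deleteVerts hc
      ((Set.Finite.mem_toFinset _).1 hx)
    rw [← heq, subtreeCount_of_isPath hp, ← hlen]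
  have hsum := sum_subtreeCount_deleteEdges_eq_add_sum_deleteVerts (t := ∅) (hE.trans hV.symm)
  rw [Finset.sum_congr rfl hedge, Finset.sum_congr rfl hvert, Finset.sum_const, Finset.sum_const,
    ← Set.ncard_eq_toFinset_card, ← Set.ncard_eq_toFinset_card, hE, hV,
    Nat.choose_succ_succ' _ 1, Nat.choose_one_right, smul_eq_mul, smul_eq_mul] at hsum
  linarith

theorem subtreeCount_singleton_of_isCycle (hc : c.IsCycle) (hv : v ∈ c.toSubgraph.verts) :
    2 * subtreeCount {v} c.toSubgraph = c.length ^ 2 + c.length := by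
  obtain ⟨_, _, p, hp, hlen, heq⟩ := exists_isPath_toSubgraph_eq_deleteVerts hc hv
  have hsplit := subtreeCount_insert_add_deleteVerts v ∅ c.toSubgraph
  rw [LawfulSingleton.insert_empty_eq, ← heq, subtreeCount_of_isPath hp, hlen,
    subtreeCount_of_isCycle hc] at hsplit
  have hsucc := Nat.choose_succ_succ' c.length 1
  have hmul := Nat.add_one_mul_choose_eq c.length 1
  rw [Nat.choose_one_right] at hsucc hmul
  linarith

end Cycle

/-- Unicyclic subgraphs: those obtained from a cycle by repeatedly attaching leaves. -/
inductive IsUnicyclic : G.Subgraph → Prop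
  | cycle {a : V} {c : G.Walk a a} (hc : c.IsCycle) : IsUnicyclic c.toSubgraph
  | leaf {K : G.Subgraph} {u v : V} (hK : IsUnicyclic K) (h : G.Adj u v) (hu : u ∈ K.verts)
      (hv : v ∉ K.verts) : IsUnicyclic (attachLeaf h K)

theorem four_mul_sq_le_three_mul_two_pow_add {m : ℕ} (hm : 3 ≤ m) :
    4 * m ^ 2 ≤ 3 * 2 ^ m + 4 * m := by
  induction m, hm using Nat.le_induction with
  | base => norm_num
  | succ m hm ih =>
    rw [pow_succ 2 m]
    nlinarith

namespace IsUnicyclic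

theorem connected (hK : IsUnicyclic K) : K.Connected := by
  induction hK with
  | cycle => exact Walk.toSubgraph_connected _
  | leaf _ h hu _ ih => exact connected_attachLeaf h ih hu

variable [Finite V]

theorem ncard_edgeSet_eq (hK : IsUnicyclic K) : K.edgeSet.ncard = K.verts.ncard := by
  induction hK with
  | cycle hc =>
    rw [ncard_edgeSet_toSubgraph_of_isTrail hc.isTrail, ncard_verts_toSubgraph_of_isCycle hc]
  | leaf _ h hu hv ih => rw [ncard_edgeSet_attachLeaf h hv, ncard_verts_attachLeaf h hu hv, ih]

theorem three_le_ncard_verts (hK : IsUnicyclic K) : 3 ≤ K.verts.ncard := by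
  induction hK with
  | cycle hc => exact ncard_verts_toSubgraph_of_isCycle hc ▸ hc.three_le_length
  | leaf _ h hu hv ih => rw [ncard_verts_attachLeaf h hu hv]; omega

theorem ncard_verts_add_three_le_subtreeCount_singleton (hK : IsUnicyclic K) (hx : x ∈ K.verts) :
    K.verts.ncard + 3 ≤ subtreeCount {x} K := by
  induction hK generalizing x with
  | @cycle a c hc =>
    rw [ncard_verts_toSubgraph_of_isCycle hc]
    nlinarith [subtreeCount_singleton_of_isCycle hc hx, hc.three_le_length]
  | leaf hK h hu hv ih =>
    rw [ncard_verts_attachLeaf h hu hv]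
    rw [verts_attachLeaf h hu] at hx
    obtain rfl | hx := hx
    · rw [subtreeCount_leaf_attachLeaf h hu hv]
      linarith [ih hu]
    · have hpos := subtreeCount_pos hK.connected
        (Set.insert_subset hu (Set.singleton_subset_iff.2 hx))
      rw [subtreeCount_singleton_attachLeaf h hu hv (ne_of_mem_of_not_mem hx hv)]
      linarith [ih hx]

theorem four_mul_subtreeCount_singleton_le (hK : IsUnicyclic K) (hx : x ∈ K.verts) :
    4 * subtreeCount {x} K ≤ 3 * 2 ^ K.verts.ncard := by
  induction hK generalizing x with
  | @cycle a c hc =>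
    rw [ncard_verts_toSubgraph_of_isCycle hc]
    nlinarith [subtreeCount_singleton_of_isCycle hc hx, hc.three_le_length,
      four_mul_sq_le_three_mul_two_pow_add hc.three_le_length]
  | @leaf K u _ hK h hu hv ih =>
    have hpow : 4 ≤ 2 ^ K.verts.ncard :=
      Nat.pow_le_pow_right two_pos ((Nat.le_succ 2).trans hK.three_le_ncard_verts)
    rw [ncard_verts_attachLeaf h hu hv, pow_succ]
    rw [verts_attachLeaf h hu] at hx
    obtain rfl | hx := hx
    · rw [subtreeCount_leaf_attachLeaf h hu hv]
      linarith [ih hu]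
    · rw [subtreeCount_singleton_attachLeaf h hu hv (ne_of_mem_of_not_mem hx hv)]
      linarith [ih hx, subtreeCount_anti (Set.subset_insert u {x}) K]

theorem le_subtreeCount (hK : IsUnicyclic K) :
    K.verts.ncard ^ 2 + 7 * K.verts.ncard ≤ 2 * subtreeCount ∅ K + 12 := by
  induction hK with
  | cycle hc =>
    rw [subtreeCount_of_isCycle hc, ncard_verts_toSubgraph_of_isCycle hc]
    obtain ⟨k, hk⟩ := Nat.exists_eq_add_of_le hc.three_le_length
    rw [hk]
    linarith [Nat.le_self_pow two_ne_zero k]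
  | leaf hK h hu hv ih =>
    rw [ncard_verts_attachLeaf h hu hv, subtreeCount_attachLeaf h hu hv]
    linarith [hK.ncard_verts_add_three_le_subtreeCount_singleton hu]

theorem four_mul_subtreeCount_le (hK : IsUnicyclic K) :
    4 * subtreeCount ∅ K ≤ 3 * 2 ^ K.verts.ncard + 4 * K.verts.ncard := by
  induction hK with
  | cycle hc =>
    rw [subtreeCount_of_isCycle hc, ncard_verts_toSubgraph_of_isCycle hc]
    exact four_mul_sq_le_three_mul_two_pow_add hc.three_le_length
  | leaf hK h hu hv ih =>
    rw [ncard_verts_attachLeaf h hu hv, subtreeCount_attachLeaf h hu hv, pow_succ]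
    linarith [hK.four_mul_subtreeCount_singleton_le hu]

end IsUnicyclic

section Top

theorem exists_adj_mem_notMem (hG : G.Connected) {s : Set V} (hne : s.Nonempty)
    (hs : s ≠ Set.univ) : ∃ u ∈ s, ∃ v ∉ s, G.Adj u v := by
  obtain ⟨x, hx⟩ := hne
  obtain ⟨y, hy⟩ := (Set.ne_univ_iff_exists_notMem s).1 hs
  obtain ⟨p⟩ := hG.preconnected x y
  obtain ⟨d, -, hfst, hsnd⟩ := p.exists_boundary_dart s hx hy
  exact ⟨d.fst, hfst, d.snd, hsnd, d.adj⟩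

theorem isUnicyclic_top [Finite V] (hG : G.Connected) (hedges : G.edgeSet.ncard = Nat.card V) :
    IsUnicyclic (⊤ : G.Subgraph) := by
  have hcyc : ¬ G.IsAcyclic := fun hacyc ↦ by
    have htree := (isTree_iff_connected_and_card.1 ⟨hG, hacyc⟩).2
    rw [Nat.card_coe_set_eq] at htree
    omega
  simp only [IsAcyclic, not_forall, not_not] at hcyc
  obtain ⟨a, c, hc⟩ := hcyc
  obtain ⟨K, hK⟩ := (Set.toFinite {K : G.Subgraph | IsUnicyclic K}).exists_maximal
    ⟨c.toSubgraph, .cycle hc⟩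
  have hverts : K.verts = Set.univ := by
    by_contra hne
    obtain ⟨u, hu, v, hv, h⟩ := exists_adj_mem_notMem hG hK.prop.connected.nonempty hne
    have hle := hK.le_of_ge (hK.prop.leaf h hu hv) (le_attachLeaf h)
    exact hv (hle.1 (verts_attachLeaf h hu ▸ Set.mem_insert v K.verts))
  have hedge : K.edgeSet = G.edgeSet := by
    refine Set.eq_of_subset_of_ncard_le K.edgeSet_subset ?_
    rw [hedges, hK.prop.ncard_edgeSet_eq, hverts, Set.ncard_univ]
  have htop : K = ⊤ := by
    refine Subgraph.ext hverts ?_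
    ext x y
    rw [← Subgraph.mem_edgeSet, hedge, mem_edgeSet, Subgraph.top_adj]
  exact htop ▸ hK.prop

end Top

section Extremal

theorem induce_insert_eq_attachLeaf {s : Set V} (h : G.Adj u v) (hu : u ∈ s)
    (huniq : ∀ x ∈ s, G.Adj x v → x = u) :
    (⊤ : G.Subgraph).induce (insert v s) = attachLeaf h ((⊤ : G.Subgraph).induce s) := by
  refine Subgraph.ext (verts_attachLeaf (K := (⊤ : G.Subgraph).induce s) h hu).symm ?_
  ext x y
  have hcomm (a b : V) : G.Adj a b ↔ G.Adj b a := G.adj_comm a b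
  have hirrefl (a : V) : ¬ G.Adj a a := G.irrefl
  simp only [attachLeaf_adj, Subgraph.induce_adj, Subgraph.top_adj, Set.mem_insert_iff]
  grind

theorem isCycle_triangle (huv : G.Adj u v) (hvx : G.Adj v x) (hxu : G.Adj x u) :
    (Walk.cons huv (.cons hvx (.cons hxu .nil))).IsCycle := by
  simp [Walk.cons_isCycle_iff, huv.ne, hvx.ne, hxu.ne, huv.ne', hxu.ne']

theorem toSubgraph_triangle (huv : G.Adj u v) (hvx : G.Adj v x) (hxu : G.Adj x u) :
    (Walk.cons huv (.cons hvx (.cons hxu .nil))).toSubgraph =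
      (⊤ : G.Subgraph).induce {u, v, x} := by
  refine Subgraph.ext ?_ ?_
  · ext y
    simp only [Walk.toSubgraph, Subgraph.verts_sup, subgraphOfAdj_verts, singletonSubgraph_verts,
      Subgraph.induce_verts]
    grind
  · ext y z
    have hcomm (a b : V) : G.Adj a b ↔ G.Adj b a := G.adj_comm a b
    have hirrefl (a : V) : ¬ G.Adj a a := G.irrefl
    have hempty : ¬ (G.singletonSubgraph u).Adj y z := id
    simp only [Walk.toSubgraph, Subgraph.sup_adj, subgraphOfAdj_adj, Subgraph.induce_adj,
      Subgraph.top_adj, Sym2.eq_iff, Set.mem_insert_iff, Set.mem_singleton_iff, hempty]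
    grind

variable {n k : ℕ}

/-- The subgraph of a graph on `Fin n` induced by the vertices `0, …, k - 1`. The graphs `USn n`
and `UPn n` arise by attaching the vertices `3, …, n - 1` one after the other as leaves, and these
are the intermediate stages. -/
def initialSubgraph (G : SimpleGraph (Fin n)) (k : ℕ) : G.Subgraph :=
  (⊤ : G.Subgraph).induce {i | i.val < k}

theorem initialSubgraph_self (G : SimpleGraph (Fin n)) : initialSubgraph G n = ⊤ := by
  rw [← Subgraph.induce_self_verts (G' := (⊤ : G.Subgraph)), initialSubgraph, Subgraph.verts_top,
    Set.eq_univ_of_forall (s := {i : Fin n | i.val < n}) Fin.is_lt]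

theorem initialSubgraph_succ {G : SimpleGraph (Fin n)} {u v : Fin n} (h : G.Adj u v)
    (hv : v.val = k) (hu : u.val < k) (huniq : ∀ x : Fin n, x.val < k → G.Adj x v → x = u) :
    initialSubgraph G (k + 1) = attachLeaf h (initialSubgraph G k) := by
  have hinsert : {i : Fin n | i.val < k + 1} = insert v {i | i.val < k} := by
    ext i
    simp only [Set.mem_ofPred_eq, Set.mem_insert_iff, Fin.ext_iff]
    omega
  rw [initialSubgraph, hinsert]
  exact induce_insert_eq_attachLeaf h hu huniq

theorem subtreeCount_initialSubgraph_three {G : SimpleGraph (Fin n)} (hn : 3 ≤ n)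
    (hG : ∀ i j : Fin n, i.val < 3 → j.val < 3 → i ≠ j → G.Adj i j) :
    subtreeCount ∅ (initialSubgraph G 3) = 9 ∧
      ∀ i : Fin n, i.val < 3 → subtreeCount {i} (initialSubgraph G 3) = 6 := by
  have h₀₁ : G.Adj ⟨0, by omega⟩ ⟨1, by omega⟩ := hG _ _ (by simp) (by simp) (by simp)
  have h₁₂ : G.Adj ⟨1, by omega⟩ ⟨2, by omega⟩ := hG _ _ (by simp) (by simp) (by simp)
  have h₂₀ : G.Adj ⟨2, by omega⟩ ⟨0, by omega⟩ := hG _ _ (by simp) (by simp) (by simp)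
  have hverts : {i : Fin n | i.val < 3} = {⟨0, by omega⟩, ⟨1, by omega⟩, ⟨2, by omega⟩} := by
    ext i
    simp only [Set.mem_ofPred_eq, Set.mem_insert_iff, Set.mem_singleton_iff, Fin.ext_iff]
    omega
  have htriangle := toSubgraph_triangle h₀₁ h₁₂ h₂₀
  rw [← hverts, ← initialSubgraph] at htriangle
  rw [← htriangle]
  refine ⟨subtreeCount_of_isCycle (isCycle_triangle h₀₁ h₁₂ h₂₀), fun i hi ↦ ?_⟩
  have hcount := subtreeCount_singleton_of_isCycle (isCycle_triangle h₀₁ h₁₂ h₂₀)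
    (v := i) (htriangle ▸ hi)
  exact Nat.eq_of_mul_eq_mul_left two_pos hcount

theorem subtreeCount_initialSubgraph_UPn (hk : 3 ≤ k) (hkn : k ≤ n) :
    subtreeCount {⟨k - 1, by omega⟩} (initialSubgraph (UPn n) k) = k + 3 ∧
      2 * subtreeCount ∅ (initialSubgraph (UPn n) k) + 12 = k ^ 2 + 7 * k := by
  have hadj (i j : Fin n) : (UPn n).Adj i j ↔ i ≠ j ∧
      ((j.val = i.val + 1 ∨ (i.val = 0 ∧ j.val + 1 = 3)) ∨
        (i.val = j.val + 1 ∨ (j.val = 0 ∧ i.val + 1 = 3))) := fromRel_adj _ _ _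
  induction k, hk using Nat.le_induction with
  | base =>
    obtain ⟨hcount, hat⟩ := subtreeCount_initialSubgraph_three (G := UPn n) hkn
      fun i j hi hj hij ↦ by rw [hadj]; omega
    rw [hcount, hat _ (by simp)]
    norm_num
  | succ k hk ih =>
    obtain ⟨hat, hcount⟩ := ih (by omega)
    have h : (UPn n).Adj ⟨k - 1, by omega⟩ ⟨k, hkn⟩ := by
      simp only [hadj, ne_eq, Fin.ext_iff]; omega
    have hu : (⟨k - 1, by omega⟩ : Fin n) ∈ (initialSubgraph (UPn n) k).verts :=
      Nat.sub_one_lt (by omega)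
    have hv : (⟨k, hkn⟩ : Fin n) ∉ (initialSubgraph (UPn n) k).verts := lt_irrefl k
    rw [initialSubgraph_succ h rfl hu fun x hx hxv ↦ by grind,
      subtreeCount_attachLeaf h hu hv]
    refine ⟨(subtreeCount_leaf_attachLeaf h hu hv).trans (by omega), ?_⟩
    rw [hat]
    linarith

theorem subtreeCount_initialSubgraph_USn (hk : 3 ≤ k) (hkn : k ≤ n) :
    4 * subtreeCount {⟨0, by omega⟩} (initialSubgraph (USn n) k) = 3 * 2 ^ k ∧
      4 * subtreeCount ∅ (initialSubgraph (USn n) k) = 3 * 2 ^ k + 4 * k := by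
  have hadj (i j : Fin n) : (USn n).Adj i j ↔ i ≠ j ∧
      (((j.val = i.val + 1 ∧ j.val < 3) ∨ (i.val = 0 ∧ j.val + 1 = 3) ∨ (i.val = 0 ∧ 3 ≤ j.val)) ∨
        ((i.val = j.val + 1 ∧ i.val < 3) ∨ (j.val = 0 ∧ i.val + 1 = 3) ∨
          (j.val = 0 ∧ 3 ≤ i.val))) := fromRel_adj _ _ _
  induction k, hk using Nat.le_induction with
  | base =>
    obtain ⟨hcount, hat⟩ := subtreeCount_initialSubgraph_three (G := USn n) hkn
      fun i j hi hj hij ↦ by rw [hadj]; omega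
    rw [hcount, hat _ (by simp)]
    norm_num
  | succ k hk ih =>
    obtain ⟨hat, hcount⟩ := ih (by omega)
    have h : (USn n).Adj ⟨0, by omega⟩ ⟨k, hkn⟩ := by
      simp only [hadj, ne_eq, Fin.ext_iff, true_and]; omega
    have hu : (⟨0, by omega⟩ : Fin n) ∈ (initialSubgraph (USn n) k).verts :=
      (Nat.succ_pos 2).trans_le hk
    have hv : (⟨k, hkn⟩ : Fin n) ∉ (initialSubgraph (USn n) k).verts := lt_irrefl k
    rw [initialSubgraph_succ h rfl hu fun x hx hxv ↦ by grind,
      subtreeCount_singleton_attachLeaf h hu hv h.ne, Set.pair_eq_singleton,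
      subtreeCount_attachLeaf h hu hv, pow_succ]
    exact ⟨by linarith, by linarith⟩

end Extremal

theorem nT_unicyclic_extremal_general {V : Type*} [Finite V] (G : SimpleGraph V)
    (hconn : G.Connected) {n : ℕ} (hcard : Nat.card V = n) (hedges : G.edgeSet.ncard = n) :
    nT (UPn n) ≤ nT G ∧ nT G ≤ nT (USn n) := by
  have huni := isUnicyclic_top hconn (hedges.trans hcard.symm)
  have hn := huni.three_le_ncard_verts
  have hlower := huni.le_subtreeCount
  have hupper := huni.four_mul_subtreeCount_le
  rw [Subgraph.verts_top, Set.ncard_univ, hcard] at hn hlower hupper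
  have hUP := (subtreeCount_initialSubgraph_UPn hn le_rfl).2
  have hUS := (subtreeCount_initialSubgraph_USn hn le_rfl).2
  rw [initialSubgraph_self] at hUP hUS
  simp only [nT_eq_subtreeCount_add_one]
  omega

/-- for every `n`-vertex unicyclic graph `G` (`n ≥ 3`),
`n(US_n) ≥ n(G) ≥ n(UP_n)`. -/
theorem nT_unicyclic_extremal (n : ℕ) (hn : 3 ≤ n) (G : SimpleGraph (Fin n))
    (hconn : G.Connected) (hedges : G.edgeSet.ncard = n) :
    nT (UPn n) ≤ nT G ∧ nT G ≤ nT (USn n) :=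
  nT_unicyclic_extremal_general G hconn (Nat.card_fin n) hedges
end

section
/- If G is an n-vertex unicyclic graph with girth l (3 ≤ l ≤ n), then for every integer k ≥ 0, n_k(US_n^l) ≥ n_k(G) ≥ n_k(UP_n^l). -/
open SimpleGraph

/-!
A unicyclic graph joins every vertex to its parent under a function `f` on `{0, …, n - 1}` that
permutes the cycle `0, …, l - 1` cyclically and sends every later vertex to an earlier one. A
subtree with `k` vertices has `k - 1` edges, so exactly one of its vertices, the root, is not joined
to its parent inside the subtree: subtrees are the in-trees of `f`.

Since the last vertex is a leaf, the number of in-trees grows with it by the number of in-trees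
through that vertex, so it suffices to compare the latter numbers. They obey the same recursion, and
by induction on the number `N` of vertices they are largest at the centre of `US` and smallest at
the end of the path of `UP`, where there are `max 1 (k + l - N)` in-trees with `k` vertices.
-/

section FunctionalGraph

variable {V : Type*} {F : V → V} {S : Set V} {r v w : V}

/-- The functional graph of `F`: every vertex `v` is joined to its parent `F v`. -/
def functionalGraph (F : V → V) : SimpleGraph V :=
  SimpleGraph.fromRel (fun u v => F u = v)

/-- `S` is the vertex set of an in-tree of `F` with root `r`: following parents from any vertex
of `S` leads to `r` without leaving `S`. The root may itself have its parent in `S`, namely when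
`S` contains a whole cycle of `F`; the edge from the root to its parent is not in the tree. -/
structure IsInTree (F : V → V) (S : Set V) (r : V) : Prop where
  root_mem : r ∈ S
  map_mem : ∀ v ∈ S, v ≠ r → F v ∈ S
  exists_iterate : ∀ v ∈ S, ∃ m, F^[m] v = r

lemma functionalGraph_adj (hF : ∀ v, F (F v) ≠ v) :
    (functionalGraph F).Adj v w ↔ F v = w ∨ F w = v := by
  simp only [functionalGraph, SimpleGraph.fromRel_adj, ne_eq, and_iff_right_iff_imp]
  rintro (h | h) rfl
  exacts [hF v (by rw [h, h]), hF v (by rw [h, h])]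

lemma adj_functionalGraph_map (hF : ∀ v, F (F v) ≠ v) : (functionalGraph F).Adj v (F v) :=
  (functionalGraph_adj hF).2 (Or.inl rfl)

lemma injective_sym2_mk_map (hF : ∀ v, F (F v) ≠ v) :
    Function.Injective (fun v => s(v, F v)) := by
  intro v w h
  rcases Sym2.eq_iff.1 h with h | h
  · exact h.1
  · exact absurd (by rw [h.2, h.1]) (hF v)

lemma eq_functionalGraph_of_ncard_edgeSet_le [Finite V] {G : SimpleGraph V}
    (hF : ∀ v, F (F v) ≠ v) (hadj : ∀ v, G.Adj v (F v)) (hcard : G.edgeSet.ncard ≤ Nat.card V) :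
    G = functionalGraph F := by
  have hrange : Set.range (fun v => s(v, F v)) = G.edgeSet := by
    refine Set.eq_of_subset_of_ncard_le (Set.range_subset_iff.2 hadj) ?_
    rwa [← Set.image_univ, Set.ncard_image_of_injective _ (injective_sym2_mk_map hF),
      Set.ncard_univ]
  ext v w
  rw [functionalGraph_adj hF, ← SimpleGraph.mem_edgeSet, ← hrange]
  simp only [Set.mem_range, Sym2.eq_iff]
  constructor
  · rintro ⟨u, ⟨rfl, h⟩ | ⟨rfl, h⟩⟩
    exacts [Or.inl h, Or.inr h]
  · rintro (h | h)
    exacts [⟨v, Or.inl ⟨rfl, h⟩⟩, ⟨w, Or.inr ⟨rfl, h⟩⟩]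

/-- The subgraph of the functional graph with vertex set `S` obtained by joining every vertex
except `r` to its parent. -/
def IsInTree.subgraph (h : IsInTree F S r) (hF : ∀ v, F (F v) ≠ v) :
    (functionalGraph F).Subgraph where
  verts := S
  Adj v w := (v ∈ S ∧ v ≠ r ∧ F v = w) ∨ (w ∈ S ∧ w ≠ r ∧ F w = v)
  adj_sub := by
    rintro v w (⟨-, -, rfl⟩ | ⟨-, -, rfl⟩)
    exacts [adj_functionalGraph_map hF, (adj_functionalGraph_map hF).symm]
  edge_vert := by
    rintro v w (⟨hv, -, -⟩ | ⟨hw, hwr, rfl⟩)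
    exacts [hv, h.map_mem w hw hwr]
  symm := ⟨fun _ _ => Or.symm⟩

lemma IsInTree.setOf_subgraph_adj_map (h : IsInTree F S r) (hF : ∀ v, F (F v) ≠ v) :
    {v | (h.subgraph hF).Adj v (F v)} = S \ {r} := by
  ext v
  constructor
  · rintro (⟨hv, hvr, -⟩ | ⟨-, -, hv⟩)
    exacts [⟨hv, hvr⟩, absurd hv (hF v)]
  · rintro ⟨hv, hvr⟩
    exact Or.inl ⟨hv, hvr, rfl⟩

lemma IsInTree.subgraph_connected (h : IsInTree F S r) (hF : ∀ v, F (F v) ≠ v) :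
    (h.subgraph hF).Connected := by
  have hreach : ∀ m v (hv : v ∈ S), F^[m] v = r →
      (h.subgraph hF).coe.Reachable ⟨v, hv⟩ ⟨r, h.root_mem⟩ := by
    intro m
    induction m with
    | zero => rintro v hv rfl; rfl
    | succ m ih =>
      intro v hv hm
      by_cases hvr : v = r
      · subst hvr; rfl
      · have hadj : (h.subgraph hF).coe.Adj ⟨v, hv⟩ ⟨F v, h.map_mem v hv hvr⟩ :=
          Or.inl ⟨hv, hvr, rfl⟩
        exact hadj.reachable.trans (ih _ _ hm)
  rw [SimpleGraph.Subgraph.connected_iff', SimpleGraph.connected_iff_exists_forall_reachable]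
  refine ⟨⟨r, h.root_mem⟩, fun ⟨v, hv⟩ => ?_⟩
  obtain ⟨m, hm⟩ := h.exists_iterate v hv
  exact (hreach m v hv hm).symm

lemma ncard_edgeSet_subgraph_functionalGraph (hF : ∀ v, F (F v) ≠ v)
    (H : (functionalGraph F).Subgraph) : H.edgeSet.ncard = {v | H.Adj v (F v)}.ncard := by
  rw [← Set.ncard_image_of_injective _ (injective_sym2_mk_map hF)]
  congr 1
  ext x
  induction x with
  | _ v w =>
    rw [SimpleGraph.Subgraph.mem_edgeSet]
    constructor
    · intro hvw
      rcases (functionalGraph_adj hF).1 (H.adj_sub hvw) with rfl | rfl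
      exacts [⟨v, hvw, rfl⟩, ⟨w, hvw.symm, Sym2.eq_swap⟩]
    · rintro ⟨u, hu, huv⟩
      rwa [← SimpleGraph.Subgraph.mem_edgeSet, ← huv]

lemma isSubtree_iff_connected_and_ncard [Finite V] {G : SimpleGraph V} {H : G.Subgraph} :
    IsSubtree H ↔ H.Connected ∧ H.edgeSet.ncard + 1 = H.verts.ncard := by
  have hedges : H.coe.edgeSet.ncard = H.edgeSet.ncard := by
    rw [← SimpleGraph.Subgraph.image_coe_edgeSet_coe,
      Set.ncard_image_of_injective _ (Sym2.map.injective Subtype.val_injective)]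
  have htree := SimpleGraph.isTree_iff_connected_and_card (G := H.coe)
  rw [SimpleGraph.isTree_iff, Nat.card_coe_set_eq, Nat.card_coe_set_eq, hedges] at htree
  rwa [IsSubtree, SimpleGraph.Subgraph.connected_iff']

lemma isSubtree_functionalGraph_iff [Finite V] (hF : ∀ v, F (F v) ≠ v)
    {H : (functionalGraph F).Subgraph} :
    IsSubtree H ↔ H.Connected ∧ ∃ r ∈ H.verts, {v | H.Adj v (F v)} = H.verts \ {r} := by
  rw [isSubtree_iff_connected_and_ncard, ncard_edgeSet_subgraph_functionalGraph hF]
  refine and_congr_right fun _ => ⟨fun hcard => ?_, ?_⟩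
  · have hsub : {v | H.Adj v (F v)} ⊆ H.verts := fun v hv => H.edge_vert hv
    obtain ⟨r, hr, hverts⟩ := (Set.exists_eq_insert_iff_ncard (Set.toFinite _)).2 ⟨hsub, hcard⟩
    refine ⟨r, hverts ▸ Set.mem_insert r _, ?_⟩
    rw [← hverts, Set.insert_sdiff_self_of_notMem hr]
  · rintro ⟨r, hr, heq⟩
    rw [heq, Set.ncard_sdiff_singleton_add_one hr]

lemma IsInTree.isSubtree_subgraph [Finite V] (h : IsInTree F S r) (hF : ∀ v, F (F v) ≠ v) :
    IsSubtree (h.subgraph hF) :=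
  (isSubtree_functionalGraph_iff hF).2
    ⟨h.subgraph_connected hF, r, h.root_mem, h.setOf_subgraph_adj_map hF⟩

lemma isInTree_verts (hF : ∀ v, F (F v) ≠ v) {H : (functionalGraph F).Subgraph}
    (hH : H.Connected) (hr : r ∈ H.verts) (hadj : {v | H.Adj v (F v)} = H.verts \ {r}) :
    IsInTree F H.verts r where
  root_mem := hr
  map_mem v hv hvr := by
    have hvF : v ∈ {v | H.Adj v (F v)} := hadj ▸ ⟨hv, hvr⟩
    exact H.edge_vert hvF.symm
  exists_iterate v hv := by
    -- The set of vertices whose parents lead to `r` is closed under adjacency in `H`.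
    by_contra hnot
    obtain ⟨p⟩ := (SimpleGraph.Subgraph.connected_iff'.1 hH).preconnected ⟨r, hr⟩ ⟨v, hv⟩
    obtain ⟨⟨⟨x, y⟩, hxy⟩, -, ⟨m, hm⟩, hy⟩ :=
      p.exists_boundary_dart {x | ∃ m, F^[m] x = r} ⟨0, rfl⟩ hnot
    rcases (functionalGraph_adj hF).1 (H.adj_sub hxy) with hFx | hFy
    · obtain _ | m := m
      · have hx : (x : V) ∈ H.verts \ {r} := hadj ▸ (show H.Adj x (F x) from hFx ▸ hxy)
        exact hx.2 hm
      · exact hy ⟨m, by rw [← hFx]; exact hm⟩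
    · exact hy ⟨m + 1, by rw [← hm, ← hFy]; rfl⟩

lemma IsInTree.subgraph_eq (hF : ∀ v, F (F v) ≠ v) {H : (functionalGraph F).Subgraph}
    (h : IsInTree F H.verts r) (hadj : {v | H.Adj v (F v)} = H.verts \ {r}) :
    h.subgraph hF = H := by
  have hmem : ∀ v, (v ∈ H.verts ∧ v ≠ r) ↔ H.Adj v (F v) := fun v => (Set.ext_iff.1 hadj v).symm
  refine SimpleGraph.Subgraph.ext rfl ?_
  ext v w
  constructor
  · rintro (⟨hv, hvr, rfl⟩ | ⟨hw, hwr, rfl⟩)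
    exacts [(hmem v).1 ⟨hv, hvr⟩, ((hmem w).1 ⟨hw, hwr⟩).symm]
  · intro hvw
    rcases (functionalGraph_adj hF).1 (H.adj_sub hvw) with rfl | rfl
    · exact Or.inl ⟨((hmem v).2 hvw).1, ((hmem v).2 hvw).2, rfl⟩
    · exact Or.inr ⟨((hmem w).2 hvw.symm).1, ((hmem w).2 hvw.symm).2, rfl⟩

lemma nk_functionalGraph [Finite V] (hF : ∀ v, F (F v) ≠ v) (k : ℕ) :
    nk (functionalGraph F) k =
      Nat.card {p : Set V × V // IsInTree F p.1 p.2 ∧ p.1.ncard = k} := by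
  symm
  refine Nat.card_eq_of_bijective
    (fun p => ⟨p.2.1.subgraph hF, p.2.1.isSubtree_subgraph hF, p.2.2⟩) ⟨?_, ?_⟩
  · rintro ⟨⟨S, r⟩, hS, _⟩ ⟨⟨S', r'⟩, hS', _⟩ heq
    have hsub : hS.subgraph hF = hS'.subgraph hF := congrArg Subtype.val heq
    obtain rfl : S = S' := congrArg SimpleGraph.Subgraph.verts hsub
    have hroot : S \ {r} = S \ {r'} := by
      rw [← hS.setOf_subgraph_adj_map hF, ← hS'.setOf_subgraph_adj_map hF, hsub]
    have hrr : r ∉ S \ {r'} := hroot ▸ fun h => h.2 rfl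
    obtain rfl : r = r' := by
      by_contra hne
      exact hrr ⟨hS.root_mem, hne⟩
    rfl
  · rintro ⟨H, hH, hcard⟩
    obtain ⟨hconn, r, hr, hadj⟩ := (isSubtree_functionalGraph_iff hF).1 hH
    have htree := isInTree_verts hF hconn hr hadj
    exact ⟨⟨(H.verts, r), htree, hcard⟩, Subtype.ext (htree.subgraph_eq hF hadj)⟩

end FunctionalGraph

section InTrees

variable {f : ℕ → ℕ} {N k r v : ℕ} {A B S : Finset ℕ}

open Classical in
/-- The `k`-vertex in-trees of `f`, as pairs of a vertex set contained in `{0, …, N - 1}` and a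
root, that contain all vertices of `A`. For `A = ∅` and `A = {v}` their numbers are `nk` and `nkAt`
of the functional graph of `f` on `{0, …, N - 1}`. -/
noncomputable def inTrees (f : ℕ → ℕ) (N : ℕ) (A : Finset ℕ) (k : ℕ) : Finset (Finset ℕ × ℕ) :=
  ((Finset.range N).powerset ×ˢ Finset.range N).filter
    (fun p => IsInTree f p.1 p.2 ∧ A ⊆ p.1 ∧ p.1.card = k)

lemma mem_inTrees {p : Finset ℕ × ℕ} :
    p ∈ inTrees f N A k ↔
      p.1 ⊆ Finset.range N ∧ IsInTree f p.1 p.2 ∧ A ⊆ p.1 ∧ p.1.card = k := by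
  simp only [inTrees, Finset.mem_filter, Finset.mem_product, Finset.mem_powerset]
  exact ⟨fun h => ⟨h.1.1, h.2⟩, fun h => ⟨⟨h.1, h.1 h.2.1.root_mem⟩, h.2⟩⟩

lemma card_inTrees_le_of_subset (h : A ⊆ B) : (inTrees f N B k).card ≤ (inTrees f N A k).card := by
  refine Finset.card_le_card fun p => ?_
  simp only [mem_inTrees]
  exact fun hp => ⟨hp.1, hp.2.1, h.trans hp.2.2.1, hp.2.2.2⟩

lemma inTrees_zero : inTrees f N A 0 = ∅ := by
  refine Finset.eq_empty_of_forall_notMem fun p hp => ?_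
  obtain ⟨-, htree, -, hcard⟩ := mem_inTrees.1 hp
  exact Finset.notMem_empty _ (Finset.card_eq_zero.1 hcard ▸ htree.root_mem)

lemma inTrees_eq_empty_of_lt (hk : N < k) : inTrees f N A k = ∅ := by
  refine Finset.eq_empty_of_forall_notMem fun p hp => ?_
  obtain ⟨hsub, -, -, hcard⟩ := mem_inTrees.1 hp
  have := Finset.card_le_card hsub
  rw [Finset.card_range] at this
  omega

lemma inTrees_card_self (hA : A ⊆ Finset.range N) : inTrees f N A N = inTrees f N ∅ N := by
  ext p
  simp only [mem_inTrees, Finset.empty_subset, true_and]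
  refine ⟨fun h => ⟨h.1, h.2.1, h.2.2.2⟩, fun ⟨hsub, htree, hcard⟩ => ⟨hsub, htree, ?_, hcard⟩⟩
  rwa [Finset.eq_of_subset_of_card_le hsub (by rw [Finset.card_range, hcard])]

lemma inTrees_singleton_one (hv : v < N) : inTrees f N {v} 1 = {({v}, v)} := by
  ext ⟨S, r⟩
  simp only [mem_inTrees, Finset.mem_singleton, Prod.mk.injEq, Finset.singleton_subset_iff]
  constructor
  · rintro ⟨-, htree, hvS, hcard⟩
    obtain rfl : {v} = S := Finset.eq_of_subset_of_card_le (by simpa using hvS) (by simp [hcard])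
    exact ⟨rfl, by simpa using htree.root_mem⟩
  · rintro ⟨rfl, rfl⟩
    refine ⟨by simpa using hv, ⟨by simp, ?_, ?_⟩, by simp, by simp⟩
    · intro w hw hne
      exact absurd (by simpa using hw) hne
    · intro w hw
      exact ⟨0, by simpa using hw⟩

lemma isInTree_insert_iff (hf : Set.MapsTo f (Set.Iio N) (Set.Iio N)) (hfN : f N < N)
    (hS : S ⊆ Finset.range N) (hr : r ≠ N) :
    IsInTree f ↑(insert N S) r ↔ IsInTree f S r ∧ f N ∈ S := by
  have hlt : ∀ v ∈ S, v < N := fun v hv => Finset.mem_range.1 (hS hv)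
  simp only [Finset.coe_insert]
  constructor
  · intro h
    refine ⟨⟨h.root_mem.resolve_left hr, fun v hv hvr => ?_, fun v hv => ?_⟩, ?_⟩
    · exact (h.map_mem v (Or.inr hv) hvr).resolve_left (hf (hlt v hv)).ne
    · exact h.exists_iterate v (Or.inr hv)
    · exact (h.map_mem N (Or.inl rfl) hr.symm).resolve_left hfN.ne
  · rintro ⟨h, hfS⟩
    refine ⟨Or.inr h.root_mem, ?_, ?_⟩
    · rintro v (rfl | hv) hvr
      exacts [Or.inr hfS, Or.inr (h.map_mem v hv hvr)]
    · rintro v (rfl | hv)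
      · obtain ⟨m, hm⟩ := h.exists_iterate _ hfS
        exact ⟨m + 1, hm⟩
      · exact h.exists_iterate v hv

lemma IsInTree.eq_singleton_of_root_eq (hf : Set.MapsTo f (Set.Iio N) (Set.Iio N))
    (hS : S ⊆ Finset.range (N + 1)) (h : IsInTree f S N) : S = {N} := by
  refine Finset.eq_singleton_iff_unique_mem.2 ⟨h.root_mem, fun v hv => ?_⟩
  by_contra hvN
  have hvlt : v < N := by
    have := Finset.mem_range.1 (hS hv)
    omega
  obtain ⟨m, hm⟩ := h.exists_iterate v hv
  exact (hf.iterate m hvlt).ne hm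

lemma card_inTrees_insert_leaf (hf : Set.MapsTo f (Set.Iio N) (Set.Iio N)) (hfN : f N < N)
    (hA : A ⊆ Finset.range N) (hk : k ≠ 0) :
    (inTrees f (N + 1) (insert N A) (k + 1)).card = (inTrees f N (insert (f N) A) k).card := by
  have hnot : ∀ {S : Finset ℕ}, S ⊆ Finset.range N → N ∉ S := fun hS hN => by simpa using hS hN
  refine Finset.card_nbij' (fun p => (p.1.erase N, p.2)) (fun p => (insert N p.1, p.2)) ?_ ?_ ?_ ?_
  · rintro ⟨S, r⟩ hp
    obtain ⟨hsub, htree, hAS, hcard⟩ := mem_inTrees.1 hp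
    obtain ⟨hNS, hAS⟩ := Finset.insert_subset_iff.1 hAS
    have hr : r ≠ N := by
      rintro rfl
      rw [htree.eq_singleton_of_root_eq hf hsub, Finset.card_singleton] at hcard
      omega
    have hsub' : S.erase N ⊆ Finset.range N := by
      rwa [← Finset.subset_insert_iff, ← Finset.range_add_one]
    rw [← Finset.insert_erase hNS, isInTree_insert_iff hf hfN hsub' hr] at htree
    refine mem_inTrees.2 ⟨hsub', htree.1, Finset.insert_subset_iff.2 ⟨htree.2, ?_⟩, ?_⟩
    · exact Finset.subset_erase.2 ⟨hAS, hnot hA⟩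
    · rw [Finset.card_erase_of_mem hNS, hcard, Nat.add_sub_cancel]
  · rintro ⟨S, r⟩ hp
    obtain ⟨hsub, htree, hAS, hcard⟩ := mem_inTrees.1 hp
    obtain ⟨hfS, hAS⟩ := Finset.insert_subset_iff.1 hAS
    have hr : r ≠ N := fun h => hnot hsub (h ▸ htree.root_mem)
    refine mem_inTrees.2 ⟨?_, (isInTree_insert_iff hf hfN hsub hr).2 ⟨htree, hfS⟩,
      Finset.insert_subset_insert _ hAS, ?_⟩
    · rw [Finset.range_add_one]
      exact Finset.insert_subset_insert _ hsub
    · rw [Finset.card_insert_of_notMem (hnot hsub), hcard]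
  · rintro ⟨S, r⟩ hp
    have hNS : N ∈ S := (mem_inTrees.1 hp).2.2.1 (Finset.mem_insert_self _ _)
    simp only [Finset.insert_erase hNS]
  · rintro ⟨S, r⟩ hp
    simp only [Finset.erase_insert (hnot (mem_inTrees.1 hp).1)]

lemma card_inTrees_succ :
    (inTrees f (N + 1) A k).card =
      (inTrees f N A k).card + (inTrees f (N + 1) (insert N A) k).card := by
  classical
  rw [← Finset.card_filter_add_card_filter_not (s := inTrees f (N + 1) A k) (fun p => N ∉ p.1)]
  congr 2 <;> ext p <;>
    simp only [Finset.mem_filter, mem_inTrees, Finset.insert_subset_iff, Finset.range_add_one,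
      not_not]
  · constructor
    · rintro ⟨⟨hsub, h⟩, hN⟩
      exact ⟨(Finset.subset_insert_iff_of_notMem hN).1 hsub, h⟩
    · rintro ⟨hsub, h⟩
      exact ⟨⟨hsub.trans (Finset.subset_insert _ _), h⟩, fun hN => by simpa using hsub hN⟩
  · tauto

end InTrees

section Cycle

/-- Parent functions of unicyclic graphs whose vertices are numbered so that `0, …, l - 1` is the
cycle, traversed downwards from `l - 1` to `0` and back to `l - 1`, and every later vertex is
attached to an earlier one. -/
structure IsUnicyclicParent (l : ℕ) (f : ℕ → ℕ) : Prop where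
  zero : f 0 = l - 1
  succ : ∀ i, i + 1 < l → f (i + 1) = i
  lt : ∀ i, l ≤ i → f i < i

/-- The number of steps from `t` to `s` along the cycle `l - 1, l - 2, …, 0, l - 1`. -/
def cycDist (l s t : ℕ) : ℕ :=
  if s ≤ t then t - s else t + l - s

/-- The vertices of the cycle `0, …, l - 1` from which `s` is reached in fewer than `k` steps. -/
def arc (l s k : ℕ) : Finset ℕ :=
  (Finset.range l).filter (fun t => cycDist l s t < k)

variable {f g : ℕ → ℕ} {l N k s t v : ℕ} {A S : Finset ℕ}

lemma IsUnicyclicParent.mapsTo (hf : IsUnicyclicParent l f) (hN : l ≤ N) :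
    Set.MapsTo f (Set.Iio N) (Set.Iio N) := by
  rintro (_ | i) hi
  · simp only [Set.mem_Iio, hf.zero] at hi ⊢
    omega
  · simp only [Set.mem_Iio] at hi ⊢
    by_cases hil : i + 1 < l
    · rw [hf.succ i hil]
      omega
    · exact (hf.lt _ (not_lt.1 hil)).trans hi

lemma IsUnicyclicParent.map_map_ne (hf : IsUnicyclicParent l f) (hl : 3 ≤ l) :
    f (f t) ≠ t := by
  obtain ⟨m, rfl⟩ : ∃ m, l = m + 3 := ⟨l - 3, by omega⟩
  match t with
  | 0 => rw [hf.zero, show m + 3 - 1 = m + 1 + 1 from rfl, hf.succ _ (by omega)]; omega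
  | 1 => rw [hf.succ 0 (by omega), hf.zero]; omega
  | i + 2 =>
    by_cases hi : i + 2 < m + 3
    · rw [hf.succ _ hi, hf.succ _ (by omega)]; omega
    · have h := hf.lt _ (not_lt.1 hi)
      exact (hf.mapsTo (not_lt.1 hi) h).ne

lemma mem_arc : t ∈ arc l s k ↔ t < l ∧ cycDist l s t < k := by
  simp only [arc, Finset.mem_filter, Finset.mem_range]

lemma cycDist_self : cycDist l s s = 0 := by
  simp [cycDist]

lemma cycDist_lt (ht : t < l) : cycDist l s t < l := by
  unfold cycDist
  split_ifs <;> omega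

lemma cycDist_eq_zero_iff (hs : s < l) : cycDist l s t = 0 ↔ t = s := by
  unfold cycDist
  split_ifs <;> omega

lemma cycDist_right_injOn (hs : s < l) : Set.InjOn (cycDist l s) (Set.Iio l) := by
  intro t ht u hu h
  simp only [cycDist, Set.mem_Iio] at ht hu h
  split_ifs at h <;> omega

lemma cycDist_cycDist (hs : s < l) : cycDist l (cycDist l s v) v = s := by
  unfold cycDist
  split_ifs <;> omega

lemma card_arc (hs : s < l) (hk : k ≤ l) : (arc l s k).card = k := by
  refine (Finset.card_nbij' (t := Finset.range k) (cycDist l s)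
    (fun a => if s + a < l then s + a else s + a - l) ?_ ?_ ?_ ?_).trans (Finset.card_range k) <;>
    intro t <;>
    simp only [Finset.mem_coe, mem_arc, Finset.mem_range, cycDist] <;> split_ifs <;> omega

lemma card_filter_cycDist_lt (hv : v < l) (hk : k ≤ l) :
    ((Finset.range l).filter (fun s => cycDist l s v < k)).card = k := by
  refine (Finset.card_nbij' (t := Finset.range k) (fun s => cycDist l s v)
    (fun a => cycDist l a v) ?_ ?_ ?_ ?_).trans (Finset.card_range k) <;>
    intro s hs <;> simp only [Finset.mem_coe, Finset.mem_filter, Finset.mem_range] at hs ⊢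
  · exact hs.2
  · exact ⟨cycDist_lt hv, by rwa [cycDist_cycDist (by omega)]⟩
  · exact cycDist_cycDist hs.1
  · exact cycDist_cycDist (by omega)

lemma IsUnicyclicParent.cycDist_map (hf : IsUnicyclicParent l f) (hs : s < l) (ht : t < l)
    (hts : t ≠ s) : cycDist l s (f t) + 1 = cycDist l s t := by
  obtain _ | t := t
  · rw [hf.zero]
    unfold cycDist
    split_ifs <;> omega
  · rw [hf.succ t ht]
    unfold cycDist
    split_ifs <;> omega

lemma IsUnicyclicParent.iterate_cycDist (hf : IsUnicyclicParent l f) (hs : s < l) (ht : t < l) :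
    f^[cycDist l s t] t = s := by
  suffices ∀ d t, t < l → cycDist l s t = d → f^[d] t = s from this _ _ ht rfl
  intro d
  induction d with
  | zero => exact fun t _ hd => (cycDist_eq_zero_iff hs).1 hd
  | succ d ih =>
    intro t ht hd
    have hts : t ≠ s := fun h => by
      rw [(cycDist_eq_zero_iff hs).2 h] at hd
      omega
    have hstep := hf.cycDist_map hs ht hts
    exact ih (f t) (hf.mapsTo le_rfl ht) (by omega)

lemma IsUnicyclicParent.isInTree_arc (hf : IsUnicyclicParent l f) (hs : s < l) (hk : 0 < k) :
    IsInTree f (arc l s k) s where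
  root_mem := mem_arc.2 ⟨hs, by rwa [cycDist_self]⟩
  map_mem t ht hts := by
    obtain ⟨htl, htk⟩ := mem_arc.1 ht
    have hstep := hf.cycDist_map hs htl hts
    exact mem_arc.2 ⟨hf.mapsTo le_rfl htl, by omega⟩
  exists_iterate t ht := ⟨_, hf.iterate_cycDist hs (mem_arc.1 ht).1⟩

lemma IsUnicyclicParent.arc_subset_of_mem (hf : IsUnicyclicParent l f) (hS : S ⊆ Finset.range l)
    (h : IsInTree f S s) (ht : t ∈ S) : arc l s (cycDist l s t + 1) ⊆ S := by
  have hs : s < l := Finset.mem_range.1 (hS h.root_mem)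
  suffices ∀ d, ∀ t ∈ S, cycDist l s t = d → arc l s (d + 1) ⊆ S from this _ t ht rfl
  intro d
  induction d with
  | zero =>
    intro t _ _ u hu
    rw [(cycDist_eq_zero_iff hs).1 (Nat.lt_one_iff.1 (mem_arc.1 hu).2)]
    exact h.root_mem
  | succ d ih =>
    intro t ht hd u hu
    have htl := Finset.mem_range.1 (hS ht)
    obtain ⟨hul, hud⟩ := mem_arc.1 hu
    have hts : t ≠ s := fun h => by
      rw [(cycDist_eq_zero_iff hs).2 h] at hd
      omega
    have hstep := hf.cycDist_map hs htl hts
    rcases (Nat.lt_succ_iff.1 hud).lt_or_eq with hlt | heq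
    · exact ih (f t) (h.map_mem t ht hts) (by omega) (mem_arc.2 ⟨hul, hlt⟩)
    · rwa [cycDist_right_injOn hs hul htl (heq.trans hd.symm)]

lemma IsUnicyclicParent.isInTree_iff_eq_arc (hf : IsUnicyclicParent l f)
    (hS : S ⊆ Finset.range l) : IsInTree f S s ↔ s ∈ S ∧ S = arc l s S.card := by
  constructor
  · intro h
    have hs : s < l := Finset.mem_range.1 (hS h.root_mem)
    have hcard : S.card ≤ l := by simpa using Finset.card_le_card hS
    refine ⟨h.root_mem, Finset.eq_of_subset_of_card_le (fun t ht => ?_) (card_arc hs hcard).le⟩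
    have htl := Finset.mem_range.1 (hS ht)
    have hle := Finset.card_le_card (hf.arc_subset_of_mem hS h ht)
    rw [card_arc hs (cycDist_lt htl)] at hle
    exact mem_arc.2 ⟨htl, hle⟩
  · rintro ⟨hs, heq⟩
    rw [heq]
    exact hf.isInTree_arc (Finset.mem_range.1 (hS hs)) (Finset.card_pos.2 ⟨s, hs⟩)

lemma IsUnicyclicParent.inTrees_cycle_eq (hf : IsUnicyclicParent l f)
    (hg : IsUnicyclicParent l g) : inTrees f l A k = inTrees g l A k := by
  ext p
  simp only [mem_inTrees]
  exact and_congr_right fun hS => by rw [hf.isInTree_iff_eq_arc hS, hg.isInTree_iff_eq_arc hS]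

lemma IsUnicyclicParent.card_inTrees_cycle (hf : IsUnicyclicParent l f) (hv : v < l)
    (hk : k ≤ l) : (inTrees f l {v} k).card = k := by
  refine (Finset.card_nbij' Prod.snd (fun s => (arc l s k, s)) ?_ ?_ ?_ ?_).trans
    (card_filter_cycDist_lt hv hk)
  · rintro ⟨S, s⟩ hp
    obtain ⟨hS, htree, hvS, rfl⟩ := mem_inTrees.1 hp
    obtain ⟨hs, heq⟩ := (hf.isInTree_iff_eq_arc hS).1 htree
    rw [Finset.singleton_subset_iff, heq] at hvS
    exact Finset.mem_filter.2 ⟨hS hs, (mem_arc.1 hvS).2⟩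
  · intro s hs
    obtain ⟨hs, hlt⟩ := Finset.mem_filter.1 hs
    have hsl := Finset.mem_range.1 hs
    exact mem_inTrees.2 ⟨Finset.filter_subset _ _, hf.isInTree_arc hsl (by omega),
      Finset.singleton_subset_iff.2 (mem_arc.2 ⟨hv, hlt⟩), card_arc hsl hk⟩
  · rintro ⟨S, s⟩ hp
    obtain ⟨hS, htree, -, rfl⟩ := mem_inTrees.1 hp
    exact Prod.ext ((hf.isInTree_iff_eq_arc hS).1 htree).2.symm rfl
  · intro s _
    rfl

end Cycle

section Extremal

/-- The parent function of `UPnl`: every vertex after the cycle is attached to its predecessor. -/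
def upParent (l i : ℕ) : ℕ :=
  if i = 0 then l - 1 else i - 1

/-- The parent function of `USnl`: every vertex after the cycle is attached to `0`. -/
def usParent (l i : ℕ) : ℕ :=
  if i = 0 then l - 1 else if i < l then i - 1 else 0

variable {f g : ℕ → ℕ} {l N n k v : ℕ}

lemma IsUnicyclicParent.pos (hf : IsUnicyclicParent l f) : 0 < l := by
  by_contra hl
  exact Nat.not_lt_zero _ (hf.lt 0 (not_lt.1 hl))

lemma isUnicyclicParent_upParent (hl : 0 < l) : IsUnicyclicParent l (upParent l) where
  zero := if_pos rfl
  succ i _ := by simp [upParent]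
  lt i hi := by
    unfold upParent
    split_ifs <;> omega

lemma isUnicyclicParent_usParent (hl : 0 < l) : IsUnicyclicParent l (usParent l) where
  zero := if_pos rfl
  succ i hi := by simp [usParent, hi]
  lt i hi := by
    unfold usParent
    split_ifs <;> omega

lemma upParent_of_le (hN : l ≤ N) : upParent l N = N - 1 := by
  unfold upParent
  split_ifs <;> omega

lemma usParent_of_le (hN : l ≤ N) : usParent l N = 0 := by
  unfold usParent
  split_ifs <;> omega

lemma IsUnicyclicParent.card_inTrees_leaf (hf : IsUnicyclicParent l f) (hN : l ≤ N)
    (hk : k ≠ 0) :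
    (inTrees f (N + 1) {N} (k + 1)).card = (inTrees f N {f N} k).card :=
  card_inTrees_insert_leaf (hf.mapsTo hN) (hf.lt N hN) (Finset.empty_subset _) hk

lemma IsUnicyclicParent.card_inTrees_singleton_succ (hf : IsUnicyclicParent l f) (hN : l ≤ N)
    (hv : v < N) (hk : k ≠ 0) :
    (inTrees f (N + 1) {v} (k + 1)).card =
      (inTrees f N {v} (k + 1)).card + (inTrees f N {f N, v} k).card := by
  rw [card_inTrees_succ, card_inTrees_insert_leaf (hf.mapsTo hN) (hf.lt N hN) (by simpa) hk]

lemma card_inTrees_singleton_one (hv : v < N) : (inTrees f N {v} 1).card = 1 := by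
  rw [inTrees_singleton_one hv, Finset.card_singleton]

lemma IsUnicyclicParent.card_inTrees_singleton_le_usParent (hf : IsUnicyclicParent l f)
    (hN : l ≤ N) (hv : v < N) :
    (inTrees f N {v} k).card ≤ (inTrees (usParent l) N {0} k).card := by
  have hl := hf.pos
  have hus := isUnicyclicParent_usParent hl
  induction N, hN using Nat.le_induction generalizing v k with
  | base =>
    rcases le_or_gt k l with hk | hk
    · rw [hf.card_inTrees_cycle hv hk, hus.card_inTrees_cycle hl hk]
    · simp only [inTrees_eq_empty_of_lt hk, le_refl]
  | succ N hN ih =>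
    match k with
    | 0 => simp only [inTrees_zero, le_refl]
    | 1 => rw [card_inTrees_singleton_one hv, card_inTrees_singleton_one N.succ_pos]
    | k + 2 =>
      have hcentre := hus.card_inTrees_singleton_succ hN (hl.trans_le hN) k.succ_ne_zero
      rw [usParent_of_le hN, Finset.pair_eq_singleton] at hcentre
      rw [hcentre]
      rcases (Nat.lt_succ_iff.1 hv).lt_or_eq with hvN | rfl
      · rw [hf.card_inTrees_singleton_succ hN hvN k.succ_ne_zero]
        have hsub : ({f N} : Finset ℕ) ⊆ {f N, v} := by simp
        exact add_le_add (ih hvN) ((card_inTrees_le_of_subset hsub).trans (ih (hf.lt N hN)))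
      · rw [hf.card_inTrees_leaf hN k.succ_ne_zero]
        exact (ih (hf.lt v hN)).trans (Nat.le_add_left _ _)

lemma card_inTrees_upParent_last (hl : 0 < l) (hN : l ≤ N) (hk : 1 ≤ k) (hkN : k ≤ N) :
    (inTrees (upParent l) N {N - 1} k).card = max 1 (k + l - N) := by
  have hup := isUnicyclicParent_upParent hl
  induction N, hN using Nat.le_induction generalizing k with
  | base =>
    rw [hup.card_inTrees_cycle (by omega) hkN]
    omega
  | succ N hN ih =>
    rw [Nat.add_sub_cancel]
    match k with
    | 1 =>
      rw [card_inTrees_singleton_one N.lt_succ_self]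
      omega
    | k + 2 =>
      rw [hup.card_inTrees_leaf hN k.succ_ne_zero, upParent_of_le hN,
        ih (by omega) (by omega)]
      omega

lemma IsUnicyclicParent.max_le_card_inTrees_singleton (hf : IsUnicyclicParent l f) (hN : l ≤ N)
    (hv : v < N) (hk : 1 ≤ k) (hkN : k ≤ N) :
    max 1 (k + l - N) ≤ (inTrees f N {v} k).card := by
  induction N, hN using Nat.le_induction generalizing v k with
  | base =>
    rw [hf.card_inTrees_cycle hv hkN]
    omega
  | succ N hN ih =>
    have hleaf : max 1 (k + l - (N + 1)) ≤ (inTrees f (N + 1) {N} k).card := by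
      match k with
      | 1 =>
        rw [card_inTrees_singleton_one N.lt_succ_self]
        omega
      | k + 2 =>
        rw [hf.card_inTrees_leaf hN k.succ_ne_zero]
        exact le_trans (by omega) (ih (hf.lt N hN) (by omega) (by omega : k + 1 ≤ N))
    rcases hkN.eq_or_lt with rfl | hkN
    · rwa [inTrees_card_self (by simpa using Nat.lt_succ_iff.1 hv),
        ← inTrees_card_self (A := {N}) (by simp)]
    · rcases (Nat.lt_succ_iff.1 hv).lt_or_eq with hvN | rfl
      · rw [card_inTrees_succ]
        have := ih hvN hk (Nat.lt_succ_iff.1 hkN)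
        omega
      · exact hleaf

lemma IsUnicyclicParent.card_inTrees_upParent_last_le (hf : IsUnicyclicParent l f) (hN : l ≤ N)
    (hv : v < N) : (inTrees (upParent l) N {N - 1} k).card ≤ (inTrees f N {v} k).card := by
  rcases k.eq_zero_or_pos with rfl | hk
  · simp only [inTrees_zero, le_refl]
  rcases le_or_gt k N with hkN | hkN
  · rw [card_inTrees_upParent_last hf.pos hN hk hkN]
    exact hf.max_le_card_inTrees_singleton hN hv hk hkN
  · simp only [inTrees_eq_empty_of_lt hkN, le_refl]

lemma IsUnicyclicParent.card_inTrees_le_of_leaf_le (hf : IsUnicyclicParent l f)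
    (hg : IsUnicyclicParent l g)
    (hleaf : ∀ N, l ≤ N → (inTrees f (N + 1) {N} k).card ≤ (inTrees g (N + 1) {N} k).card)
    (hn : l ≤ n) : (inTrees f n ∅ k).card ≤ (inTrees g n ∅ k).card := by
  induction n, hn using Nat.le_induction with
  | base => rw [hf.inTrees_cycle_eq hg]
  | succ N hN ih =>
    rw [card_inTrees_succ, card_inTrees_succ (f := g)]
    exact add_le_add ih (hleaf N hN)

lemma IsUnicyclicParent.card_inTrees_upParent_le (hf : IsUnicyclicParent l f) (hn : l ≤ n) :
    (inTrees (upParent l) n ∅ k).card ≤ (inTrees f n ∅ k).card :=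
  (isUnicyclicParent_upParent hf.pos).card_inTrees_le_of_leaf_le hf
    (fun N hN => hf.card_inTrees_upParent_last_le (Nat.le_succ_of_le hN) N.lt_succ_self) hn

lemma IsUnicyclicParent.card_inTrees_le_usParent (hf : IsUnicyclicParent l f) (hn : l ≤ n) :
    (inTrees f n ∅ k).card ≤ (inTrees (usParent l) n ∅ k).card := by
  have hus := isUnicyclicParent_usParent hf.pos
  refine hf.card_inTrees_le_of_leaf_le hus (fun N hN => ?_) hn
  match k with
  | 0 => simp only [inTrees_zero, le_refl]
  | 1 => simp only [card_inTrees_singleton_one N.lt_succ_self, le_refl]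
  | k + 2 =>
    rw [hf.card_inTrees_leaf hN k.succ_ne_zero, hus.card_inTrees_leaf hN k.succ_ne_zero,
      usParent_of_le hN]
    exact hf.card_inTrees_singleton_le_usParent hN (hf.lt N hN)

end Extremal

section Labelling

variable {V : Type*} {G : SimpleGraph V} {F : V → V} {f : ℕ → ℕ} {c : V → ℕ} {d : ℕ → V}
  {l m n : ℕ}

lemma comap_functionalGraph (hc : Function.Injective c) (h : Function.Semiconj c F f) :
    (functionalGraph f).comap c = functionalGraph F := by
  ext v w
  simp only [functionalGraph, SimpleGraph.comap_adj, SimpleGraph.fromRel_adj, ← h.eq, hc.eq_iff,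
    hc.ne_iff]

lemma isInTree_image_iff {S : Set V} {r : V} (hc : Function.Injective c)
    (h : Function.Semiconj c F f) : IsInTree f (c '' S) (c r) ↔ IsInTree F S r := by
  have hiter : ∀ m v, f^[m] (c v) = c r ↔ F^[m] v = r := fun m v => by
    rw [← (h.iterate_right m).eq, hc.eq_iff]
  constructor
  · refine fun hS => ⟨(hc.mem_set_image).1 hS.root_mem, fun v hv hvr => ?_, fun v hv => ?_⟩
    · rw [← hc.mem_set_image, h.eq]
      exact hS.map_mem _ (Set.mem_image_of_mem c hv) (hc.ne hvr)
    · simpa only [hiter] using hS.exists_iterate _ (Set.mem_image_of_mem c hv)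
  · refine fun hS => ⟨Set.mem_image_of_mem c hS.root_mem, ?_, ?_⟩
    · rintro _ ⟨v, hv, rfl⟩ hvr
      rw [← h.eq]
      exact Set.mem_image_of_mem c (hS.map_mem v hv (ne_of_apply_ne c hvr))
    · rintro _ ⟨v, hv, rfl⟩
      simpa only [hiter] using hS.exists_iterate v hv

lemma card_isInTree_eq_card_inTrees [Finite V] (hc : Function.Injective c)
    (hrange : Set.range c = Set.Iio n) (h : Function.Semiconj c F f) (k : ℕ) :
    Nat.card {p : Set V × V // IsInTree F p.1 p.2 ∧ p.1.ncard = k} = (inTrees f n ∅ k).card := by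
  have himage : ∀ p : Set V × V, p ∈ {p : Set V × V | IsInTree F p.1 p.2 ∧ p.1.ncard = k} →
      ((c '' p.1).toFinite.toFinset, c p.2) ∈ inTrees f n ∅ k := by
    rintro ⟨S, r⟩ ⟨hS, hcard⟩
    refine mem_inTrees.2 ⟨?_, ?_, Finset.empty_subset _, ?_⟩
    · rw [Set.Finite.toFinset_subset, Finset.coe_range, ← hrange]
      exact Set.image_subset_range c S
    · rwa [Set.Finite.coe_toFinset, isInTree_image_iff hc h]
    · rw [← Set.ncard_eq_toFinset_card _, Set.ncard_image_of_injective S hc, hcard]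
  refine (Nat.card_coe_set_eq _).trans
    ((Set.ncard_congr (fun p _ => _) himage ?_ ?_).trans (Set.ncard_coe_finset _))
  · rintro ⟨S, r⟩ ⟨S', r'⟩ - - heq
    obtain ⟨hS, hr⟩ := Prod.ext_iff.1 heq
    exact Prod.ext (hc.image_injective (Set.Finite.toFinset_inj.1 hS)) (hc hr)
  · rintro ⟨T, s⟩ hT
    obtain ⟨hsub, htree, -, hcard⟩ := mem_inTrees.1 hT
    have hT_range : ↑T ⊆ Set.range c := by
      rwa [hrange, ← Finset.coe_range, Finset.coe_subset]
    obtain ⟨r, rfl⟩ := hT_range htree.root_mem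
    have hcT : c '' (c ⁻¹' ↑T) = T := Set.image_preimage_eq_of_subset hT_range
    refine ⟨(c ⁻¹' ↑T, r), ⟨?_, ?_⟩, Prod.ext ?_ rfl⟩
    · rwa [← isInTree_image_iff hc h, hcT]
    · rw [← Set.ncard_image_of_injective _ hc, hcT, Set.ncard_coe_finset, hcard]
    · exact Finset.coe_injective (by rw [Set.Finite.coe_toFinset, hcT])

lemma IsUnicyclicParent.nk_comap_functionalGraph [Finite V] (hf : IsUnicyclicParent l f)
    (hl : 3 ≤ l) (hn : l ≤ n) (hc : Function.Injective c) (hrange : Set.range c = Set.Iio n)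
    (k : ℕ) : nk ((functionalGraph f).comap c) k = (inTrees f n ∅ k).card := by
  have hparent : ∀ v, ∃ w, c w = f (c v) := fun v => by
    have hv : f (c v) ∈ Set.Iio n := hf.mapsTo hn (hrange ▸ Set.mem_range_self v)
    rwa [← hrange] at hv
  choose F hF using hparent
  have hFF : ∀ v, F (F v) ≠ v := fun v hv => by
    refine hf.map_map_ne hl (t := c v) ?_
    rw [← hF, ← hF, hv]
  rw [comap_functionalGraph hc hF, nk_functionalGraph hFF,
    card_isInTree_eq_card_inTrees hc hrange hF]

lemma UPnl_eq_comap_functionalGraph :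
    UPnl n l = (functionalGraph (upParent l)).comap Fin.val := by
  ext u v
  simp only [UPnl, functionalGraph, upParent, SimpleGraph.comap_adj, SimpleGraph.fromRel_adj,
    ne_eq, Fin.ext_iff]
  split_ifs <;> omega

lemma USnl_eq_comap_functionalGraph :
    USnl n l = (functionalGraph (usParent l)).comap Fin.val := by
  ext u v
  simp only [USnl, functionalGraph, usParent, SimpleGraph.comap_adj, SimpleGraph.fromRel_adj,
    ne_eq, Fin.ext_iff]
  split_ifs <;> omega

lemma nk_UPnl (hl : 3 ≤ l) (hn : l ≤ n) (k : ℕ) :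
    nk (UPnl n l) k = (inTrees (upParent l) n ∅ k).card := by
  rw [UPnl_eq_comap_functionalGraph]
  exact (isUnicyclicParent_upParent (by omega)).nk_comap_functionalGraph hl hn Fin.val_injective
    Fin.range_val k

lemma nk_USnl (hl : 3 ≤ l) (hn : l ≤ n) (k : ℕ) :
    nk (USnl n l) k = (inTrees (usParent l) n ∅ k).card := by
  rw [USnl_eq_comap_functionalGraph]
  exact (isUnicyclicParent_usParent (by omega)).nk_comap_functionalGraph hl hn Fin.val_injective
    Fin.range_val k

lemma exists_adj_of_ne_univ (hconn : G.Connected) {s : Set V} (hs : s.Nonempty)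
    (hs_univ : s ≠ Set.univ) : ∃ u ∈ s, ∃ w ∉ s, G.Adj u w := by
  obtain ⟨a, ha⟩ := hs
  obtain ⟨b, hb⟩ := (Set.ne_univ_iff_exists_notMem s).1 hs_univ
  obtain ⟨p⟩ := hconn.preconnected a b
  obtain ⟨e, -, hu, hw⟩ := p.exists_boundary_dart s ha hb
  exact ⟨e.fst, hu, e.snd, hw, e.adj⟩

lemma exists_injOn_extension_adj (hconn : G.Connected) (hd : Set.InjOn d (Set.Iio l))
    (hl : 0 < l) (hlm : l ≤ m) (hm : m ≤ Nat.card V) :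
    ∃ d' : ℕ → V, Set.InjOn d' (Set.Iio m) ∧ Set.EqOn d' d (Set.Iio l) ∧
      ∀ i, l ≤ i → i < m → ∃ j < i, G.Adj (d' i) (d' j) := by
  induction m, hlm using Nat.le_induction with
  | base => exact ⟨d, hd, Set.eqOn_refl _ _, fun i hi hil => absurd hi (not_le.2 hil)⟩
  | succ m hlm ih =>
    obtain ⟨d', hinj, heq, hadj⟩ := ih (by omega)
    have hproper : d' '' Set.Iio m ≠ Set.univ := fun huniv => by
      have hcard := congrArg Set.ncard huniv
      rw [hinj.ncard_image, Set.ncard_univ, Set.ncard_Iio_nat] at hcard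
      omega
    obtain ⟨_, ⟨j, hj, rfl⟩, w, hw, hjw⟩ :=
      exists_adj_of_ne_univ hconn (s := d' '' Set.Iio m) ⟨d' 0, 0, hl.trans_le hlm, rfl⟩
        hproper
    have hupdate : Set.EqOn (Function.update d' m w) d' (Set.Iio m) := fun i hi =>
      Function.update_of_ne (ne_of_lt hi) w d'
    refine ⟨Function.update d' m w, ?_, (hupdate.mono (Set.Iio_subset_Iio hlm)).trans heq, ?_⟩
    · rw [← Order.succ_eq_add_one, Order.Iio_succ_eq_insert, Set.injOn_insert Set.self_notMem_Iio,
        hupdate.injOn_iff, hupdate.image_eq, Function.update_self]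
      exact ⟨hinj, hw⟩
    · intro i hli him
      rcases (Nat.lt_succ_iff.1 him).lt_or_eq with him | rfl
      · obtain ⟨j, hji, hij⟩ := hadj i hli him
        exact ⟨j, hji, by rwa [hupdate him, hupdate (hji.trans him)]⟩
      · exact ⟨j, hj, by rw [hupdate hj, Function.update_self]; exact hjw.symm⟩

lemma exists_injOn_girth_adj (hG : ¬ G.IsAcyclic) :
    ∃ d : ℕ → V, Set.InjOn d (Set.Iio G.girth) ∧
      ∀ i < G.girth, G.Adj (d i) (d (upParent G.girth i)) := by
  obtain ⟨a, p, hp, hlen⟩ := SimpleGraph.exists_girth_eq_length.2 hG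
  have hthree := SimpleGraph.three_le_girth hG
  rw [hlen] at hthree ⊢
  refine ⟨p.getVert, hp.getVert_injOn'.mono fun i hi => Nat.le_sub_one_of_lt hi, ?_⟩
  rintro (_ | i) hi
  · have hlast := p.adj_getVert_succ (i := p.length - 1) (by omega)
    rw [Nat.sub_add_cancel (by omega), p.getVert_length] at hlast
    rw [p.getVert_zero]
    exact hlast.symm
  · exact (p.adj_getVert_succ (by omega)).symm

lemma girth_le_natCard [Finite V] : G.girth ≤ Nat.card V := by
  by_cases hG : G.IsAcyclic
  · rw [hG.girth_eq_zero]
    exact Nat.zero_le _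
  · obtain ⟨d, hinj, -⟩ := exists_injOn_girth_adj hG
    rw [← Set.ncard_Iio_nat G.girth, ← hinj.ncard_image]
    exact Set.ncard_le_card _

lemma exists_isUnicyclicParent_adj [Finite V] (hconn : G.Connected) (hG : ¬ G.IsAcyclic) :
    ∃ (f : ℕ → ℕ) (d : ℕ → V), IsUnicyclicParent G.girth f ∧
      Set.InjOn d (Set.Iio (Nat.card V)) ∧ ∀ i < Nat.card V, G.Adj (d i) (d (f i)) := by
  have hthree := SimpleGraph.three_le_girth hG
  have hup := isUnicyclicParent_upParent (l := G.girth) (by omega)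
  obtain ⟨d₀, hinj₀, hcycle⟩ := exists_injOn_girth_adj hG
  obtain ⟨d, hinj, heq, hadj⟩ := exists_injOn_extension_adj hconn hinj₀ (by omega)
    girth_le_natCard le_rfl
  have hparent : ∀ i, ∃ j, G.girth ≤ i → j < i ∧ (i < Nat.card V → G.Adj (d i) (d j)) :=
    fun i => by
      by_cases hi : G.girth ≤ i ∧ i < Nat.card V
      · obtain ⟨j, hji, hij⟩ := hadj i hi.1 hi.2
        exact ⟨j, fun _ => ⟨hji, fun _ => hij⟩⟩
      · exact ⟨0, fun hli => ⟨by omega, fun hin => absurd ⟨hli, hin⟩ hi⟩⟩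
  choose p hp using hparent
  refine ⟨fun i => if i < G.girth then upParent G.girth i else p i, d,
    ⟨?_, fun i hi => ?_, fun i hi => ?_⟩, hinj, fun i hi => ?_⟩
  · rw [if_pos (by omega), hup.zero]
  · rw [if_pos hi, hup.succ i hi]
  · rw [if_neg (not_lt.2 hi)]
    exact (hp i hi).1
  · beta_reduce
    split_ifs with hil
    · rw [heq hil, heq (hup.mapsTo le_rfl hil)]
      exact hcycle i hil
    · exact (hp i (not_lt.1 hil)).2 hi

lemma not_isAcyclic_of_ncard_edgeSet_eq [Finite V] (hconn : G.Connected)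
    (hedges : G.edgeSet.ncard = Nat.card V) : ¬ G.IsAcyclic := fun hG => by
  have hcard := (SimpleGraph.isTree_iff_connected_and_card.1 ⟨hconn, hG⟩).2
  rw [Nat.card_coe_set_eq, hedges] at hcard
  omega

lemma exists_eq_comap_functionalGraph [Finite V] (hconn : G.Connected) (hG : ¬ G.IsAcyclic)
    (hcard : G.edgeSet.ncard ≤ Nat.card V) :
    ∃ (f : ℕ → ℕ) (c : V → ℕ), IsUnicyclicParent G.girth f ∧ Function.Injective c ∧
      Set.range c = Set.Iio (Nat.card V) ∧ G = (functionalGraph f).comap c := by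
  obtain ⟨f, d, hf, hinj, hadj⟩ := exists_isUnicyclicParent_adj hconn hG
  have himage : d '' Set.Iio (Nat.card V) = Set.univ := by
    rw [Set.eq_univ_iff_ncard, hinj.ncard_image, Set.ncard_Iio_nat]
  have hd : Set.BijOn d (Set.Iio (Nat.card V)) Set.univ := himage ▸ hinj.bijOn_image
  set c := Function.invFunOn d (Set.Iio (Nat.card V))
  have hinv : Set.InvOn c d (Set.Iio (Nat.card V)) Set.univ := hd.invOn_invFunOn
  have hc : Set.BijOn c Set.univ (Set.Iio (Nat.card V)) := Set.BijOn.symm hinv.symm hd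
  have hc_inj : Function.Injective c := Set.injOn_univ.1 hc.injOn
  have hc_lt : ∀ v, c v < Nat.card V := fun v => hc.mapsTo (Set.mem_univ v)
  have hdc : ∀ v, d (c v) = v := fun v => hinv.2 (Set.mem_univ v)
  have hsemi : Function.Semiconj c (fun v => d (f (c v))) f := fun v =>
    hinv.1 (hf.mapsTo girth_le_natCard (hc_lt v))
  refine ⟨f, c, hf, hc_inj, by rw [← Set.image_univ, hc.image_eq], ?_⟩
  rw [comap_functionalGraph hc_inj hsemi]
  refine eq_functionalGraph_of_ncard_edgeSet_le (fun v hv => ?_) (fun v => ?_) hcard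
  · refine hf.map_map_ne (SimpleGraph.three_le_girth hG) (t := c v) ?_
    rw [← hsemi.eq, ← hsemi.eq, hv]
  · have hv := hadj (c v) (hc_lt v)
    rwa [hdc] at hv

end Labelling

theorem nk_unicyclic_girth_extremal_general {V : Type*} [Finite V] {n : ℕ} (hV : Nat.card V = n)
    (G : SimpleGraph V) (hconn : G.Connected) (hedges : G.edgeSet.ncard = n) (k : ℕ) :
    nk (UPnl n G.girth) k ≤ nk G k ∧ nk G k ≤ nk (USnl n G.girth) k := by
  subst hV
  have hG := not_isAcyclic_of_ncard_edgeSet_eq hconn hedges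
  have hthree : 3 ≤ G.girth := SimpleGraph.three_le_girth hG
  have hle : G.girth ≤ Nat.card V := girth_le_natCard
  obtain ⟨f, c, hf, hc, hrange, hGf⟩ := exists_eq_comap_functionalGraph hconn hG hedges.le
  have hnk : nk G k = (inTrees f (Nat.card V) ∅ k).card := by
    conv_lhs => rw [hGf]
    exact hf.nk_comap_functionalGraph hthree hle hc hrange k
  rw [hnk, nk_UPnl hthree hle, nk_USnl hthree hle]
  exact ⟨hf.card_inTrees_upParent_le hle, hf.card_inTrees_le_usParent hle⟩

/-- if `G` is an `n`-vertex unicyclic graph with girth `l`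
(`3 ≤ l ≤ n`), then `n_k(US_n^l) ≥ n_k(G) ≥ n_k(UP_n^l)` for every `k ≥ 0`. -/
theorem nk_unicyclic_girth_extremal (n l : ℕ) (hl : 3 ≤ l) (hn : l ≤ n)
    (G : SimpleGraph (Fin n)) (hconn : G.Connected) (hedges : G.edgeSet.ncard = n)
    (hgirth : G.girth = l) (k : ℕ) :
    nk (UPnl n l) k ≤ nk G k ∧ nk G k ≤ nk (USnl n l) k :=
  hgirth ▸ nk_unicyclic_girth_extremal_general (Nat.card_fin n) G hconn hedges k
end

section
/- For any integers l_1 ≥ l_2 ≥ 3, n(U_1(l_1,l_2)) - n(U_2(l_1,l_2)) = (l_1 - l_2)(l_1 l_2 + l_1 + l_2 - 1)/2 ≥ 0, with equality if and only if l_1 = l_2. Moreover, with u and v the branching vertices of U_1(l_1,l_2) and U_2(l_1,l_2) respectively, n(u, U_1(l_1,l_2)) - n(v, U_2(l_1,l_2)) = (l_1+1)(l_2+1)(l_1-l_2)/2 ≥ 0. -/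
open SimpleGraph

/-! The graph `UPnl n l` is the path on `n` vertices with one extra edge `ab`, so we compare the
subtrees of `G ⊔ edge a b` with those of `G`. A subtree avoiding the edge `ab` is a subtree of `G`;
deleting `ab` from any other subtree leaves a pair of vertex-disjoint subtrees of `G`, one
containing `a` and the other `b`, and every such pair arises exactly once.

The subtrees of a path are its intervals `[i, j]`. A disjoint pair `[i, j] ∋ a`, `[k, m] ∋ b` with
`a ≤ b` is therefore given by its outer ends `i ≤ a` and `m ≥ b` together with two points `j < k`
of `[a, b]`. -/

section Support

variable {V : Type*} {F₁ F₂ : SimpleGraph V}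

lemma adj_left_of_notMem_support {u v : V} (h : (F₁ ⊔ F₂).Adj u v) (hu : u ∉ F₂.support) :
    F₁.Adj u v :=
  h.resolve_right fun h₂ => hu ⟨v, h₂⟩

lemma edges_subset_left_of_notMem_support (hF : Disjoint F₁.support F₂.support) {u v : V}
    (p : (F₁ ⊔ F₂).Walk u v) (hu : u ∉ F₂.support) : ∀ e ∈ p.edges, e ∈ F₁.edgeSet := by
  induction p with
  | nil => simp
  | cons h p ih =>
    have h₁ := adj_left_of_notMem_support h hu
    have hw := Set.disjoint_left.1 hF ⟨_, h₁.symm⟩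
    simpa [h₁] using ih hw

lemma isAcyclic_sup_of_disjoint_support (hF : Disjoint F₁.support F₂.support)
    (h₁ : F₁.IsAcyclic) (h₂ : F₂.IsAcyclic) : (F₁ ⊔ F₂).IsAcyclic := by
  intro u p hp
  by_cases hu : u ∈ F₂.support
  · have hp₂ : ∀ e ∈ (p.mapLe (sup_comm F₁ F₂).le).edges, e ∈ F₂.edgeSet :=
      edges_subset_left_of_notMem_support hF.symm _ (Set.disjoint_right.1 hF hu)
    exact h₂ _ ((hp.mapLe _).transfer hp₂)
  · exact h₁ _ (hp.transfer (edges_subset_left_of_notMem_support hF p hu))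

end Support

section Subtree

variable {V : Type*} {G : SimpleGraph V}

lemma verts_subset_of_connected {H : G.Subgraph} (hH : H.Connected) {s : Set V} {u : V}
    (hu : u ∈ H.verts) (hus : u ∈ s) (hs : ∀ x ∈ s, ∀ y, H.Adj x y → y ∈ s) : H.verts ⊆ s := by
  intro v hv
  by_contra hvs
  obtain ⟨p⟩ := hH.coe ⟨u, hu⟩ ⟨v, hv⟩
  obtain ⟨d, -, hd, hd'⟩ := p.exists_boundary_dart (Subtype.val ⁻¹' s) hus hvs
  exact hd' (hs _ hd _ d.adj)

lemma support_spanningCoe_subset_verts (H : G.Subgraph) : H.spanningCoe.support ⊆ H.verts :=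
  fun _ ⟨_, h⟩ => H.edge_vert h

lemma exists_walk_coe_map_eq (H : G.Subgraph) {u v : V} (p : H.spanningCoe.Walk u v)
    (hu : u ∈ H.verts) (hv : v ∈ H.verts) :
    ∃ q : H.coe.Walk ⟨u, hu⟩ ⟨v, hv⟩, q.map H.coeEmbeddingSpanningCoe.toHom = p := by
  induction p with
  | nil => exact ⟨.nil, rfl⟩
  | cons h p ih =>
    obtain ⟨q, rfl⟩ := ih (H.edge_vert h.symm) hv
    exact ⟨.cons (G := H.coe) (v := ⟨_, H.edge_vert h.symm⟩) h q, rfl⟩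

lemma isAcyclic_coe_iff_isAcyclic_spanningCoe (H : G.Subgraph) :
    H.coe.IsAcyclic ↔ H.spanningCoe.IsAcyclic := by
  refine ⟨fun h u p hp => ?_, fun h => h.embedding H.coeEmbeddingSpanningCoe⟩
  have hu : u ∈ H.verts := H.edge_vert (p.adj_snd hp.not_nil)
  obtain ⟨q, rfl⟩ := exists_walk_coe_map_eq H p hu hu
  exact h q hp.of_map

/-- The subgraph of `G'` with the same vertices and edges as `H`, in analogy with
`SimpleGraph.Walk.transfer`. -/
@[simps] def transferSubgraph (H : G.Subgraph) {G' : SimpleGraph V} (h : H.spanningCoe ≤ G') :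
    G'.Subgraph where
  verts := H.verts
  Adj := H.Adj
  adj_sub hxy := h hxy
  edge_vert := H.edge_vert
  symm := H.symm

lemma isSubtree_transferSubgraph_iff {H : G.Subgraph} {G' : SimpleGraph V}
    (h : H.spanningCoe ≤ G') : IsSubtree (transferSubgraph H h) ↔ IsSubtree H := by
  simp only [IsSubtree, Subgraph.connected_iff']
  exact Iff.rfl

end Subtree

section Join

variable {V : Type*} {G : SimpleGraph V} {a b : V}

/-- `(A, B)` is a pair of vertex-disjoint subtrees with `a` in `A` and `b` in `B`: these are the
pieces left of a subtree of `G ⊔ edge a b` when its edge `ab` is deleted. -/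
structure IsDisjointSubtreePair (a b : V) (A B : G.Subgraph) : Prop where
  isSubtree_left : IsSubtree A
  isSubtree_right : IsSubtree B
  mem_left : a ∈ A.verts
  mem_right : b ∈ B.verts
  disjoint : Disjoint A.verts B.verts

/-- The number of pairs of vertex-disjoint subtrees of `G`, the first containing `a` and the
second containing `b`. -/
noncomputable def nDisjointPairs (G : SimpleGraph V) (a b : V) : ℕ :=
  Nat.card {P : G.Subgraph × G.Subgraph // IsDisjointSubtreePair a b P.1 P.2}

/-- The union of `A`, `B` and the new edge `ab`, as a subgraph of `G ⊔ edge a b`. -/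
def joinSubgraph (hab : a ≠ b) (A B : G.Subgraph) : (G ⊔ edge a b).Subgraph :=
  transferSubgraph A (A.spanningCoe_le.trans le_sup_left) ⊔
    subgraphOfAdj _ (sup_adj .. |>.2 <| .inr <| edge_adj .. |>.2 ⟨.inl ⟨rfl, rfl⟩, hab⟩) ⊔
    transferSubgraph B (B.spanningCoe_le.trans le_sup_left)

lemma joinSubgraph_adj (hab : a ≠ b) (A B : G.Subgraph) {x y : V} :
    (joinSubgraph hab A B).Adj x y ↔ (A.Adj x y ∨ B.Adj x y) ∨ s(a, b) = s(x, y) := by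
  simp [joinSubgraph, or_right_comm]

lemma spanningCoe_joinSubgraph (hab : a ≠ b) (A B : G.Subgraph) :
    (joinSubgraph hab A B).spanningCoe = A.spanningCoe ⊔ B.spanningCoe ⊔ edge a b := by
  ext x y
  simp only [Subgraph.spanningCoe_adj, joinSubgraph_adj, sup_adj, adj_edge]
  grind [Subgraph.Adj.ne]

lemma verts_joinSubgraph (hab : a ≠ b) {A B : G.Subgraph} (ha : a ∈ A.verts) (hb : b ∈ B.verts) :
    (joinSubgraph hab A B).verts = A.verts ∪ B.verts := by
  ext x
  simp only [joinSubgraph, Subgraph.verts_sup, transferSubgraph_verts, subgraphOfAdj_verts]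
  grind

lemma le_of_spanningCoe_le_sup {A A' B : G.Subgraph} (hA : A.Connected) (ha : a ∈ A.verts)
    (ha' : a ∈ A'.verts) (hd : Disjoint A'.verts B.verts)
    (h : A.spanningCoe ≤ A'.spanningCoe ⊔ B.spanningCoe) : A ≤ A' := by
  have hadj : ∀ x ∈ A'.verts, ∀ y, A.Adj x y → A'.Adj x y := fun x hx y hxy =>
    (h hxy).resolve_right fun hB => Set.disjoint_left.1 hd hx (B.edge_vert hB)
  have hverts : A.verts ⊆ A'.verts := verts_subset_of_connected hA ha ha' fun x hx y hxy =>
    A'.edge_vert (hadj x hx y hxy).symm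
  exact ⟨hverts, fun x y hxy => hadj x (hverts (A.edge_vert hxy)) y hxy⟩

namespace IsDisjointSubtreePair

variable {A B A' B' : G.Subgraph}

lemma not_adj (h : IsDisjointSubtreePair a b A B) :
    ¬ (A.spanningCoe ⊔ B.spanningCoe).Adj a b
  | .inl hA => Set.disjoint_left.1 h.disjoint (A.edge_vert hA.symm) h.mem_right
  | .inr hB => Set.disjoint_left.1 h.disjoint h.mem_left (B.edge_vert hB)

lemma not_reachable (h : IsDisjointSubtreePair a b A B) :
    ¬ (A.spanningCoe ⊔ B.spanningCoe).Reachable a b := by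
  rintro ⟨p⟩
  obtain ⟨d, -, hd, hd'⟩ := p.exists_boundary_dart A.verts h.mem_left
    (Set.disjoint_right.1 h.disjoint h.mem_right)
  rcases d.adj with hA | hB
  · exact hd' (A.edge_vert hA.symm)
  · exact Set.disjoint_left.1 h.disjoint hd (B.edge_vert hB)

lemma isSubtree_joinSubgraph (h : IsDisjointSubtreePair a b A B) (hab : a ≠ b) :
    IsSubtree (joinSubgraph hab A B) := by
  refine ⟨?_, ?_⟩
  · have hA : (transferSubgraph A (A.spanningCoe_le.trans le_sup_left) :
        (G ⊔ edge a b).Subgraph).Connected :=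
      ((isSubtree_transferSubgraph_iff _).2 h.isSubtree_left).1
    have hB : (transferSubgraph B (B.spanningCoe_le.trans le_sup_left) :
        (G ⊔ edge a b).Subgraph).Connected :=
      ((isSubtree_transferSubgraph_iff _).2 h.isSubtree_right).1
    exact Subgraph.connected_sup (Subgraph.connected_sup hA.preconnected
      (Subgraph.subgraphOfAdj_connected _).preconnected ⟨a, h.mem_left, by simp⟩).preconnected
      hB.preconnected ⟨b, by simp, h.mem_right⟩
  · rw [isAcyclic_coe_iff_isAcyclic_spanningCoe, spanningCoe_joinSubgraph]
    refine .sup_edge_of_not_reachable h.not_reachable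
      (isAcyclic_sup_of_disjoint_support (h.disjoint.mono (support_spanningCoe_subset_verts A)
        (support_spanningCoe_subset_verts B)) ?_ ?_)
    · exact (isAcyclic_coe_iff_isAcyclic_spanningCoe A).1 h.isSubtree_left.2
    · exact (isAcyclic_coe_iff_isAcyclic_spanningCoe B).1 h.isSubtree_right.2

lemma spanningCoe_joinSubgraph_sdiff_edge (h : IsDisjointSubtreePair a b A B) (hab : a ≠ b) :
    (joinSubgraph hab A B).spanningCoe \ edge a b = A.spanningCoe ⊔ B.spanningCoe := by
  rw [spanningCoe_joinSubgraph]
  exact ((disjoint_edge _).2 h.not_adj).sup_sdiff_cancel_right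

lemma eq_of_joinSubgraph_eq (h : IsDisjointSubtreePair a b A B)
    (h' : IsDisjointSubtreePair a b A' B') (hab : a ≠ b)
    (heq : joinSubgraph hab A B = joinSubgraph hab A' B') : A = A' ∧ B = B' := by
  have hsup : A.spanningCoe ⊔ B.spanningCoe = A'.spanningCoe ⊔ B'.spanningCoe := by
    rw [← h.spanningCoe_joinSubgraph_sdiff_edge hab, heq,
      h'.spanningCoe_joinSubgraph_sdiff_edge hab]
  have hA : A ≤ A' := le_of_spanningCoe_le_sup h.isSubtree_left.1 h.mem_left h'.mem_left
    h'.disjoint (le_sup_left.trans hsup.le)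
  have hA' : A' ≤ A := le_of_spanningCoe_le_sup h'.isSubtree_left.1 h'.mem_left h.mem_left
    h.disjoint (le_sup_left.trans hsup.ge)
  rw [sup_comm, sup_comm A'.spanningCoe] at hsup
  have hB : B ≤ B' := le_of_spanningCoe_le_sup h.isSubtree_right.1 h.mem_right h'.mem_right
    h'.disjoint.symm (le_sup_left.trans hsup.le)
  have hB' : B' ≤ B := le_of_spanningCoe_le_sup h'.isSubtree_right.1 h'.mem_right h.mem_right
    h.disjoint.symm (le_sup_left.trans hsup.ge)
  exact ⟨hA.antisymm hA', hB.antisymm hB'⟩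

end IsDisjointSubtreePair

variable {F : SimpleGraph V}

/-- The connected component of `v` in `F ≤ G`, as a subgraph of `G`. -/
def componentSubgraph (hF : F ≤ G) (v : V) : G.Subgraph :=
  transferSubgraph (F.connectedComponentMk v).toSubgraph ((Subgraph.spanningCoe_le _).trans hF)

@[simp]
lemma mem_verts_componentSubgraph (hF : F ≤ G) {v x : V} :
    x ∈ (componentSubgraph hF v).verts ↔ F.Reachable x v :=
  ConnectedComponent.eq

lemma componentSubgraph_adj (hF : F ≤ G) {v x y : V} :
    (componentSubgraph hF v).Adj x y ↔ F.Reachable x v ∧ F.Adj x y := by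
  simpa [componentSubgraph] using fun hx h => h.symm.reachable.trans hx

lemma isSubtree_componentSubgraph (hF : F ≤ G) (hac : F.IsAcyclic) (v : V) :
    IsSubtree (componentSubgraph hF v) :=
  (isSubtree_transferSubgraph_iff _).2
    ⟨ConnectedComponent.connected_toSubgraph _, hac.subgraph _⟩

lemma isDisjointSubtreePair_componentSubgraph (hF : F ≤ G) (hac : F.IsAcyclic)
    (hab : ¬ F.Reachable a b) :
    IsDisjointSubtreePair a b (componentSubgraph hF a) (componentSubgraph hF b) where
  isSubtree_left := isSubtree_componentSubgraph hF hac a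
  isSubtree_right := isSubtree_componentSubgraph hF hac b
  mem_left := (mem_verts_componentSubgraph hF).2 .rfl
  mem_right := (mem_verts_componentSubgraph hF).2 .rfl
  disjoint := Set.disjoint_left.2 fun _ hxa hxb =>
    hab (((mem_verts_componentSubgraph hF).1 hxa).symm.trans
      ((mem_verts_componentSubgraph hF).1 hxb))

lemma mem_verts_of_reachable {H : G.Subgraph} (hF : F ≤ H.spanningCoe) {u v : V}
    (hv : v ∈ H.verts) (h : F.Reachable u v) : u ∈ H.verts := by
  obtain ⟨p⟩ := h
  cases p with
  | nil => exact hv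
  | cons hadj _ => exact H.edge_vert (hF hadj)

lemma adj_iff_sdiff_edge_adj_or_eq {H : G.Subgraph} (hab : H.Adj a b) {x y : V} :
    H.Adj x y ↔ (H.spanningCoe \ edge a b).Adj x y ∨ s(a, b) = s(x, y) := by
  have hcongr (h : s(a, b) = s(x, y)) : H.Adj x y := (H.adj_congr_of_sym2 h).1 hab
  simp only [sdiff_adj, Subgraph.spanningCoe_adj, adj_edge]
  grind [Subgraph.Adj.ne]

lemma reachable_or_reachable_of_mem_verts {H : G.Subgraph} (hH : H.Connected) (hab : H.Adj a b)
    {x : V} (hx : x ∈ H.verts) :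
    (H.spanningCoe \ edge a b).Reachable x a ∨ (H.spanningCoe \ edge a b).Reachable x b := by
  set F := H.spanningCoe \ edge a b
  refine verts_subset_of_connected (s := {x | F.Reachable x a ∨ F.Reachable x b}) hH
    (H.edge_vert hab) (.inl .rfl) (fun x hx y hxy => ?_) hx
  rcases (adj_iff_sdiff_edge_adj_or_eq hab).1 hxy with hxy | hxy
  · exact hx.imp hxy.symm.reachable.trans hxy.symm.reachable.trans
  · rcases Sym2.eq_iff.1 hxy with ⟨-, rfl⟩ | ⟨rfl, -⟩
    exacts [.inr .rfl, .inl .rfl]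

lemma exists_joinSubgraph_eq (hab : a ≠ b) {H : (G ⊔ edge a b).Subgraph} (hH : IsSubtree H)
    (hHab : H.Adj a b) :
    ∃ A B : G.Subgraph, IsDisjointSubtreePair a b A B ∧ joinSubgraph hab A B = H := by
  set F := H.spanningCoe \ edge a b
  have hFG : F ≤ G := sdiff_le_iff.2 (H.spanningCoe_le.trans (sup_comm _ _).le)
  have hac : H.spanningCoe.IsAcyclic := (isAcyclic_coe_iff_isAcyclic_spanningCoe H).1 hH.2
  have hbridge : ¬ F.Reachable a b :=
    isBridge_iff.1 (isAcyclic_iff_forall_adj_isBridge.1 hac hHab)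
  have hpair := isDisjointSubtreePair_componentSubgraph hFG (hac.anti sdiff_le) hbridge
  have hreach {x : V} (hx : x ∈ H.verts) : F.Reachable x a ∨ F.Reachable x b :=
    reachable_or_reachable_of_mem_verts hH.1 hHab hx
  refine ⟨_, _, hpair, Subgraph.ext (Set.ext fun x => ?_) (funext₂ fun x y => propext ?_)⟩
  · rw [verts_joinSubgraph hab hpair.mem_left hpair.mem_right, Set.mem_union,
      mem_verts_componentSubgraph, mem_verts_componentSubgraph]
    refine ⟨?_, hreach⟩
    rintro (hx | hx)
    · exact mem_verts_of_reachable sdiff_le (H.edge_vert hHab) hx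
    · exact mem_verts_of_reachable sdiff_le (H.edge_vert hHab.symm) hx
  · have hF : H.Adj x y ↔ F.Adj x y ∨ s(a, b) = s(x, y) := adj_iff_sdiff_edge_adj_or_eq hHab
    have hxy (h : F.Adj x y) : F.Reachable x a ∨ F.Reachable x b :=
      hreach (H.edge_vert (hF.2 (.inl h)))
    rw [joinSubgraph_adj, componentSubgraph_adj, componentSubgraph_adj, hF]
    tauto

lemma card_isSubtree_adj (hab : a ≠ b) :
    Nat.card {H : (G ⊔ edge a b).Subgraph // IsSubtree H ∧ H.Adj a b} = nDisjointPairs G a b := by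
  symm
  refine Nat.card_eq_of_bijective (fun P => ⟨joinSubgraph hab P.1.1 P.1.2,
    P.2.isSubtree_joinSubgraph hab, (joinSubgraph_adj hab _ _).2 (.inr rfl)⟩) ⟨?_, ?_⟩
  · rintro ⟨P, hP⟩ ⟨Q, hQ⟩ h
    exact Subtype.ext (Prod.ext_iff.2 (hP.eq_of_joinSubgraph_eq hQ hab (congrArg Subtype.val h)))
  · rintro ⟨H, hH, hHab⟩
    obtain ⟨A, B, hAB, rfl⟩ := exists_joinSubgraph_eq hab hH hHab
    exact ⟨⟨(A, B), hAB⟩, rfl⟩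

lemma card_isSubtree_not_adj (hG : ¬ G.Adj a b) (p : Set V → Prop) :
    Nat.card {H : (G ⊔ edge a b).Subgraph // (IsSubtree H ∧ p H.verts) ∧ ¬ H.Adj a b} =
      Nat.card {H : G.Subgraph // IsSubtree H ∧ p H.verts} :=
  Nat.card_congr
    { toFun := fun H => ⟨transferSubgraph H.1 (Subgraph.spanningCoe_sup_edge_le _ H.2.2),
        (isSubtree_transferSubgraph_iff _).2 H.2.1.1, H.2.1.2⟩
      invFun := fun H => ⟨transferSubgraph H.1 (H.1.spanningCoe_le.trans le_sup_left),
        ⟨(isSubtree_transferSubgraph_iff _).2 H.2.1, H.2.2⟩, fun h => hG (H.1.adj_sub h)⟩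
      left_inv := fun _ => rfl
      right_inv := fun _ => rfl }

theorem card_isSubtree_sup_edge [Finite V] (hab : a ≠ b) (hG : ¬ G.Adj a b) {p : Set V → Prop}
    (hp : ∀ s, a ∈ s → b ∈ s → p s) :
    Nat.card {H : (G ⊔ edge a b).Subgraph // IsSubtree H ∧ p H.verts} =
      Nat.card {H : G.Subgraph // IsSubtree H ∧ p H.verts} + nDisjointPairs G a b := by
  have hcongr (H : (G ⊔ edge a b).Subgraph) :
      (IsSubtree H ∧ p H.verts) ∧ H.Adj a b ↔ IsSubtree H ∧ H.Adj a b := by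
    have hpH (h : H.Adj a b) : p H.verts := hp _ (H.edge_vert h) (H.edge_vert h.symm)
    tauto
  calc
    _ = Nat.card {H : (G ⊔ edge a b).Subgraph // (IsSubtree H ∧ p H.verts) ∧ H.Adj a b} +
        Nat.card {H : (G ⊔ edge a b).Subgraph // (IsSubtree H ∧ p H.verts) ∧ ¬ H.Adj a b} :=
      (Set.ncard_inter_add_ncard_sdiff_eq_ncard
        {H : (G ⊔ edge a b).Subgraph | IsSubtree H ∧ p H.verts} {H | H.Adj a b}
        (Set.toFinite _)).symm
    _ = _ := by
      simp only [hcongr]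
      rw [card_isSubtree_adj hab, card_isSubtree_not_adj hG, add_comm]

theorem nT_sup_edge [Finite V] (hab : a ≠ b) (hG : ¬ G.Adj a b) :
    nT (G ⊔ edge a b) = nT G + nDisjointPairs G a b := by
  have := card_isSubtree_sup_edge hab hG (p := fun _ => True) fun _ _ _ => trivial
  simp only [and_true] at this
  rw [nT, this, nT, add_assoc]

theorem nAt_sup_edge [Finite V] (hab : a ≠ b) (hG : ¬ G.Adj a b) :
    nAt (G ⊔ edge a b) b = nAt G b + nDisjointPairs G a b :=
  card_isSubtree_sup_edge hab hG fun _ _ hb => hb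

end Join

section Hasse

variable {α : Type*} [LinearOrder α]

lemma mem_Iic_of_hasse_adj {u v x y : α} (huv : u ⋖ v) (h : (hasse α).Adj x y)
    (hxy : s(x, y) ≠ s(u, v)) (hx : x ≤ u) : y ≤ u := by
  rcases hasse_adj.1 h with h | h
  · by_contra! hy
    obtain rfl : x = u := hx.antisymm (h.le_of_lt hy)
    exact hxy (by rw [h.unique_right huv])
  · exact h.le.trans hx

lemma isAcyclic_hasse : (hasse α).IsAcyclic := by
  have hbridge {u v : α} (huv : u ⋖ v) : (hasse α).IsBridge s(u, v) := by
    rintro ⟨p⟩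
    obtain ⟨d, -, hd, hd'⟩ := p.exists_boundary_dart (Set.Iic u) le_rfl huv.lt.not_ge
    exact hd' (mem_Iic_of_hasse_adj huv (deleteEdges_adj.1 d.adj).1 (deleteEdges_adj.1 d.adj).2 hd)
  refine isAcyclic_iff_forall_adj_isBridge.2 fun u v huv => ?_
  rcases hasse_adj.1 huv with h | h
  · exact hbridge h
  · exact Sym2.eq_swap ▸ hbridge h

lemma adj_of_connected_of_covBy {H : (hasse α).Subgraph} (hH : H.Connected) {u v : α}
    (huv : u ⋖ v) (hu : u ∈ H.verts) (hv : v ∈ H.verts) : H.Adj u v := by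
  by_contra hadj
  have hcut : H.verts ⊆ Set.Iic u := verts_subset_of_connected hH hu le_rfl fun x hx y hxy =>
    mem_Iic_of_hasse_adj huv hxy.adj_sub
      (fun h => hadj ((H.adj_congr_of_sym2 h).1 hxy)) hx
  exact huv.lt.not_ge (hcut hv)

lemma ordConnected_verts {H : (hasse α).Subgraph} (hH : H.Connected) : H.verts.OrdConnected := by
  refine Set.ordConnected_iff.2 fun x hx y hy _ z hz => ?_
  by_contra hzH
  have hcut : H.verts ⊆ Set.Iio z := by
    refine verts_subset_of_connected hH hx (hz.1.lt_of_ne (by grind)) fun w hw w' hww' => ?_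
    have hw' : w' ≠ z := fun h => hzH (h ▸ H.edge_vert hww'.symm)
    rcases hasse_adj.1 hww'.adj_sub with h | h
    · exact (h.ge_of_gt hw).lt_of_ne hw'
    · exact h.lt.trans hw
  exact (hcut hy).not_ge hz.2

/-- The segment from `a` to `b` of a linear order, as an induced subgraph of its Hasse diagram. -/
def segmentSubgraph (a b : α) : (hasse α).Subgraph := (⊤ : (hasse α).Subgraph).induce (Set.Icc a b)

lemma segmentSubgraph_inj {a b c d : α} (hab : a ≤ b) :
    segmentSubgraph a b = segmentSubgraph c d ↔ a = c ∧ b = d := by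
  refine ⟨fun h => (Set.Icc_eq_Icc_iff hab).1 (congrArg Subgraph.verts h), ?_⟩
  rintro ⟨rfl, rfl⟩
  rfl

lemma connected_segmentSubgraph [Finite α] {a b : α} (hab : a ≤ b) :
    (segmentSubgraph a b).Connected := by
  have hreach (x : α) (hx : x ∈ Set.Icc a b) :
      (segmentSubgraph a b).coe.Reachable ⟨x, hx⟩ ⟨a, Set.left_mem_Icc.2 hab⟩ := by
    induction x using WellFoundedLT.induction with
    | ind x ih =>
      rcases hx.1.eq_or_lt with rfl | hax
      · rfl
      · obtain ⟨y, hay, hyx⟩ := exists_le_covBy_of_lt hax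
        have hy : y ∈ Set.Icc a b := ⟨hay, hyx.le.trans hx.2⟩
        have hadj : (segmentSubgraph a b).coe.Adj ⟨x, hx⟩ ⟨y, hy⟩ :=
          ⟨hx, hy, hasse_adj.2 (.inr hyx)⟩
        exact hadj.reachable.trans (ih y hyx.lt hy)
  rw [Subgraph.connected_iff']
  exact connected_iff_exists_forall_reachable _ |>.2 ⟨_, fun x => (hreach x x.2).symm⟩

lemma eq_segmentSubgraph_of_connected {H : (hasse α).Subgraph} (hH : H.Connected) {a b : α}
    (hab : H.verts = Set.Icc a b) : H = segmentSubgraph a b := by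
  refine Subgraph.ext hab (funext₂ fun x y => propext ⟨fun h => ?_, ?_⟩)
  · exact ⟨hab ▸ H.edge_vert h, hab ▸ H.edge_vert h.symm, h.adj_sub⟩
  · rintro ⟨hx, hy, h⟩
    rw [← hab] at hx hy
    rcases hasse_adj.1 h with h | h
    · exact adj_of_connected_of_covBy hH h hx hy
    · exact (adj_of_connected_of_covBy hH h hy hx).symm

lemma isSubtree_hasse_iff [Finite α] {H : (hasse α).Subgraph} :
    IsSubtree H ↔ ∃ a b, a ≤ b ∧ segmentSubgraph a b = H := by
  constructor
  · rintro ⟨hH, -⟩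
    obtain ⟨a, ha, hmin⟩ := H.verts.exists_min_image id H.verts.toFinite hH.nonempty
    obtain ⟨b, hb, hmax⟩ := H.verts.exists_max_image id H.verts.toFinite hH.nonempty
    have hverts : H.verts = Set.Icc a b :=
      Set.Subset.antisymm (fun x hx => ⟨hmin x hx, hmax x hx⟩) ((ordConnected_verts hH).out ha hb)
    exact ⟨a, b, hmin b hb, (eq_segmentSubgraph_of_connected hH hverts).symm⟩
  · rintro ⟨a, b, hab, rfl⟩
    exact ⟨connected_segmentSubgraph hab, isAcyclic_hasse.subgraph _⟩

lemma isDisjointSubtreePair_segmentSubgraph_iff [Finite α] {u v a b c d : α} (huv : u ≤ v)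
    (hab : a ≤ b) (hcd : c ≤ d) :
    IsDisjointSubtreePair u v (segmentSubgraph a b) (segmentSubgraph c d) ↔
      (a ≤ u ∧ u ≤ b) ∧ (c ≤ v ∧ v ≤ d) ∧ b < c := by
  constructor
  · rintro ⟨-, -, hu, hv, hdisj⟩
    refine ⟨hu, hv, lt_of_not_ge fun hcb => ?_⟩
    have hmem : max u c ∈ Set.Icc a b := ⟨hu.1.trans (le_max_left u c), max_le hu.2 hcb⟩
    have hmem' : max u c ∈ Set.Icc c d := ⟨le_max_right u c, max_le (huv.trans hv.2) hcd⟩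
    exact Set.disjoint_left.1 hdisj hmem hmem'
  · rintro ⟨hu, hv, hbc⟩
    refine ⟨isSubtree_hasse_iff.2 ⟨a, b, hab, rfl⟩, isSubtree_hasse_iff.2 ⟨c, d, hcd, rfl⟩, hu, hv,
      Set.disjoint_left.2 fun x hx hx' => ?_⟩
    exact (hx.2.trans_lt hbc).not_ge hx'.1

theorem nAt_hasse [Finite α] (v : α) :
    nAt (hasse α) v = Nat.card (Set.Iic v) * Nat.card (Set.Ici v) := by
  rw [← Nat.card_prod]
  symm
  refine Nat.card_eq_of_bijective (fun p => ⟨segmentSubgraph p.1 p.2,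
    isSubtree_hasse_iff.2 ⟨p.1, p.2, p.1.2.trans p.2.2, rfl⟩, p.1.2, p.2.2⟩) ⟨?_, ?_⟩
  · rintro ⟨a, b⟩ ⟨c, d⟩ h
    obtain ⟨hac, hbd⟩ := (segmentSubgraph_inj (a.2.trans b.2)).1 (congrArg Subtype.val h)
    exact Prod.ext (Subtype.ext hac) (Subtype.ext hbd)
  · rintro ⟨H, hH, hv⟩
    obtain ⟨a, b, -, rfl⟩ := isSubtree_hasse_iff.1 hH
    exact ⟨(⟨a, hv.1⟩, ⟨b, hv.2⟩), rfl⟩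

lemma natCard_subtype_fst_lt_snd (α : Type*) [LinearOrder α] [Finite α] :
    Nat.card {p : α × α // p.1 < p.2} = (Nat.card α).choose 2 := by
  have := Fintype.ofFinite α
  rw [Nat.card_eq_fintype_card, Nat.card_eq_fintype_card, Fintype.card_subtype,
    Fintype.card_product_filter_lt]

theorem nDisjointPairs_hasse [Finite α] {u v : α} (huv : u ≤ v) :
    nDisjointPairs (hasse α) u v =
      Nat.card (Set.Iic u) * Nat.card (Set.Ici v) * (Nat.card (Set.Icc u v)).choose 2 := by
  rw [← natCard_subtype_fst_lt_snd, ← Nat.card_prod, ← Nat.card_prod]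
  symm
  refine Nat.card_eq_of_bijective (fun p => ⟨(segmentSubgraph p.1.1 p.2.1.1,
    segmentSubgraph p.2.1.2 p.1.2), ?_⟩) ⟨?_, ?_⟩
  · obtain ⟨⟨⟨a, ha⟩, ⟨d, hd⟩⟩, ⟨⟨b, hb⟩, ⟨c, hc⟩⟩, hbc⟩ := p
    exact (isDisjointSubtreePair_segmentSubgraph_iff huv (ha.trans hb.1) (hc.2.trans hd)).2
      ⟨⟨ha, hb.1⟩, ⟨hc.2, hd⟩, hbc⟩
  · rintro ⟨⟨⟨a, ha⟩, ⟨d, hd⟩⟩, ⟨⟨b, hb⟩, ⟨c, hc⟩⟩, hbc⟩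
      ⟨⟨⟨a', ha'⟩, ⟨d', hd'⟩⟩, ⟨⟨b', hb'⟩, ⟨c', hc'⟩⟩, hbc'⟩ h
    simp only [Subtype.mk.injEq, Prod.mk.injEq, segmentSubgraph_inj (ha.trans hb.1),
      segmentSubgraph_inj (hc.2.trans hd)] at h ⊢
    tauto
  · rintro ⟨⟨A, B⟩, hAB⟩
    obtain ⟨a, b, hab, rfl⟩ := isSubtree_hasse_iff.1 hAB.isSubtree_left
    obtain ⟨c, d, hcd, rfl⟩ := isSubtree_hasse_iff.1 hAB.isSubtree_right
    obtain ⟨⟨ha, hb⟩, ⟨hc, hd⟩, hbc⟩ :=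
      (isDisjointSubtreePair_segmentSubgraph_iff huv hab hcd).1 hAB
    exact ⟨((⟨a, ha⟩, ⟨d, hd⟩), ⟨(⟨b, hb, hbc.le.trans hc⟩, ⟨c, hb.trans hbc.le, hc⟩), hbc⟩), rfl⟩

end Hasse

section Lollipop

variable {n l : ℕ}

lemma UPnl_eq_pathGraph_sup_edge (hl : 3 ≤ l) (hln : l ≤ n) :
    UPnl n l = pathGraph n ⊔ edge ⟨0, by omega⟩ ⟨l - 1, by omega⟩ := by
  ext u v
  simp only [UPnl, fromRel_adj, sup_adj, pathGraph_adj, edge_adj, Fin.ext_iff, ne_eq]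
  omega

lemma mk_zero_ne_mk_sub_one (hl : 2 ≤ l) (hln : l ≤ n) :
    (⟨0, by omega⟩ : Fin n) ≠ ⟨l - 1, by omega⟩ := by
  rw [Ne, Fin.mk.injEq]
  omega

lemma not_pathGraph_adj_zero_sub_one (hl : 3 ≤ l) (hln : l ≤ n) :
    ¬ (pathGraph n).Adj ⟨0, by omega⟩ ⟨l - 1, by omega⟩ := by
  rw [pathGraph_adj]
  dsimp only
  omega

lemma nAt_pathGraph (hl : 0 < l) (hln : l ≤ n) :
    nAt (pathGraph n) ⟨l - 1, by omega⟩ = l * (n - l + 1) := by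
  have hleft : l - 1 + 1 = l := by omega
  have hright : n - (l - 1) = n - l + 1 := by omega
  simp only [pathGraph, nAt_hasse, Nat.card_coe_set_eq, ← Finset.coe_Iic, ← Finset.coe_Ici,
    Set.ncard_coe_finset, Fin.card_Iic, Fin.card_Ici, hleft, hright]

lemma nDisjointPairs_pathGraph (hl : 0 < l) (hln : l ≤ n) :
    nDisjointPairs (pathGraph n) ⟨0, by omega⟩ ⟨l - 1, by omega⟩ = (n - l + 1) * l.choose 2 := by
  have hle : (⟨0, by omega⟩ : Fin n) ≤ ⟨l - 1, by omega⟩ := Fin.mk_le_mk.2 (Nat.zero_le _)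
  have hleft : l - 1 + 1 = l := by omega
  have hright : n - (l - 1) = n - l + 1 := by omega
  simp only [pathGraph, nDisjointPairs_hasse hle, Nat.card_coe_set_eq, ← Finset.coe_Iic,
    ← Finset.coe_Ici, ← Finset.coe_Icc, Set.ncard_coe_finset, Fin.card_Iic, Fin.card_Ici,
    Fin.card_Icc, hleft, hright, zero_add, one_mul, Nat.sub_zero]

theorem nT_UPnl (hl : 3 ≤ l) (hln : l ≤ n) :
    nT (UPnl n l) = nT (pathGraph n) + (n - l + 1) * l.choose 2 := by
  rw [UPnl_eq_pathGraph_sup_edge hl hln,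
    nT_sup_edge (mk_zero_ne_mk_sub_one (by omega) hln) (not_pathGraph_adj_zero_sub_one hl hln),
    nDisjointPairs_pathGraph (by omega) hln]

theorem nAt_UPnl (hl : 3 ≤ l) (hln : l ≤ n) :
    nAt (UPnl n l) ⟨l - 1, by omega⟩ = (n - l + 1) * (l + 1).choose 2 := by
  rw [UPnl_eq_pathGraph_sup_edge hl hln,
    nAt_sup_edge (mk_zero_ne_mk_sub_one (by omega) hln) (not_pathGraph_adj_zero_sub_one hl hln),
    nDisjointPairs_pathGraph (by omega) hln, nAt_pathGraph (by omega) hln,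
    Nat.choose_succ_succ' l 1, Nat.choose_one_right]
  ring

end Lollipop

section Arithmetic

variable {k l : ℕ}

lemma two_mul_succ_mul_choose_two (hkl : k ≤ l) (hl : 1 ≤ l) :
    2 * ((k + 1) * l.choose 2) =
      2 * ((l + 1) * k.choose 2) + (l - k) * (l * k + l + k - 1) := by
  have hpos : 1 ≤ l * k + l + k := by omega
  qify [hkl, hpos]
  rw [Nat.cast_choose_two, Nat.cast_choose_two]
  ring

lemma two_mul_succ_mul_succ_choose_two (hkl : k ≤ l) :
    2 * ((k + 1) * (l + 1).choose 2) =
      2 * ((l + 1) * (k + 1).choose 2) + (l + 1) * (k + 1) * (l - k) := by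
  qify [hkl]
  rw [Nat.cast_choose_two, Nat.cast_choose_two]
  push_cast
  ring

end Arithmetic

/-- for `l₁ ≥ l₂ ≥ 3`, with `U_1(l₁,l₂)` the cycle `C_{l₁}` with a
pendant path of length `l₂` and `U_2(l₁,l₂)` the cycle `C_{l₂}` with a pendant path
of length `l₁`, and `u`, `v` their branching vertices:
`n(U_1) - n(U_2) = (l₁-l₂)(l₁l₂+l₁+l₂-1)/2 ≥ 0` with equality iff `l₁ = l₂`, and
`n(u,U_1) - n(v,U_2) = (l₁+1)(l₂+1)(l₁-l₂)/2 ≥ 0`. -/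
theorem nT_two_segments (l₁ l₂ : ℕ) (h₂ : 3 ≤ l₂) (h₁₂ : l₂ ≤ l₁) :
    2 * nT (UPnl (l₁ + l₂) l₁) =
      2 * nT (UPnl (l₁ + l₂) l₂) + (l₁ - l₂) * (l₁ * l₂ + l₁ + l₂ - 1) ∧
    nT (UPnl (l₁ + l₂) l₂) ≤ nT (UPnl (l₁ + l₂) l₁) ∧
    (nT (UPnl (l₁ + l₂) l₁) = nT (UPnl (l₁ + l₂) l₂) ↔ l₁ = l₂) ∧
    2 * nAt (UPnl (l₁ + l₂) l₁) ⟨l₁ - 1, by omega⟩ =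
      2 * nAt (UPnl (l₁ + l₂) l₂) ⟨l₂ - 1, by omega⟩ +
        (l₁ + 1) * (l₂ + 1) * (l₁ - l₂) ∧
    nAt (UPnl (l₁ + l₂) l₂) ⟨l₂ - 1, by omega⟩ ≤
      nAt (UPnl (l₁ + l₂) l₁) ⟨l₁ - 1, by omega⟩ := by
  have hT₁ := nT_UPnl (h₂.trans h₁₂) (Nat.le_add_right l₁ l₂)
  have hT₂ := nT_UPnl h₂ (Nat.le_add_left l₂ l₁)
  have hAt₁ := nAt_UPnl (h₂.trans h₁₂) (Nat.le_add_right l₁ l₂)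
  have hAt₂ := nAt_UPnl h₂ (Nat.le_add_left l₂ l₁)
  rw [Nat.add_sub_cancel_left] at hT₁ hAt₁
  rw [Nat.add_sub_cancel] at hT₂ hAt₂
  have hT : 2 * nT (UPnl (l₁ + l₂) l₁) =
      2 * nT (UPnl (l₁ + l₂) l₂) + (l₁ - l₂) * (l₁ * l₂ + l₁ + l₂ - 1) := by
    rw [hT₁, hT₂]
    linarith [two_mul_succ_mul_choose_two h₁₂ (by omega)]
  have hAt := two_mul_succ_mul_succ_choose_two h₁₂
  rw [← hAt₁, ← hAt₂] at hAt
  have hzero : (l₁ - l₂) * (l₁ * l₂ + l₁ + l₂ - 1) = 0 ↔ l₁ = l₂ := by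
    rw [mul_eq_zero]
    omega
  exact ⟨hT, by omega, by omega, hAt, by omega⟩
end
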